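/- arXiv:2105.09001 — 2 statements merged into one kernel-verified Lean document; each statement's English description precedes it below -/
import Mathlib

section
/- Let n ≥ 5 and let R be an (n+2)-dimensional complex solvable Leibniz algebra whose nilradical is isomorphic to F_n^1 or to F_n^2 (the naturally graded non-Lie filiform Leibniz algebras of dimension n). Then R is isomorphic to one of the three algebras R_1, R_2, R_3. -/
section LeibnizGeneralities

variable {L : Type*} [AddCommGroup L] [Module ℂ L]

/-- The Leibniz identity `[[a,b],c] = [[a,c],b] + [a,[b,c]]` for a bilinear bracket. -/
def IsLeibnizBracket (b : L →ₗ[ℂ] L →ₗ[ℂ] L) : Prop :=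
  ∀ u v w : L, b (b u v) w = b (b u w) v + b u (b v w)

/-- The subspace spanned by all brackets of elements of `A` with elements of `B`. -/
def bracketSpan (b : L →ₗ[ℂ] L →ₗ[ℂ] L) (A B : Submodule ℂ L) : Submodule ℂ L :=
  Submodule.span ℂ {z | ∃ u ∈ A, ∃ v ∈ B, z = b u v}

/-- The lower central series of the subalgebra `N`:
`N^1 = N`, `N^{k+1} = [N^k, N]` (here `lowerCentral b N k` is `N^{k+1}`). -/
def lowerCentral (b : L →ₗ[ℂ] L →ₗ[ℂ] L) (N : Submodule ℂ L) : ℕ → Submodule ℂ L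
  | 0 => N
  | k + 1 => bracketSpan b (lowerCentral b N k) N

/-- The derived series of the algebra:
`L^{(1)} = L`, `L^{(s+1)} = [L^{(s)}, L^{(s)}]` (here `leibnizDerivedSeries b s` is `L^{(s+1)}`). -/
def leibnizDerivedSeries (b : L →ₗ[ℂ] L →ₗ[ℂ] L) : ℕ → Submodule ℂ L
  | 0 => ⊤
  | s + 1 => bracketSpan b (leibnizDerivedSeries b s) (leibnizDerivedSeries b s)

/-- The subalgebra `N` is nilpotent: some term of its lower central series vanishes. -/
def IsNilpotentOn (b : L →ₗ[ℂ] L →ₗ[ℂ] L) (N : Submodule ℂ L) : Prop :=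
  ∃ k, lowerCentral b N k = ⊥

/-- The algebra is solvable: some term of its derived series vanishes. -/
def IsSolvableBracket (b : L →ₗ[ℂ] L →ₗ[ℂ] L) : Prop :=
  ∃ s, leibnizDerivedSeries b s = ⊥

/-- A (two-sided) ideal of the Leibniz algebra. -/
def IsLeibnizIdeal (b : L →ₗ[ℂ] L →ₗ[ℂ] L) (I : Submodule ℂ L) : Prop :=
  bracketSpan b I ⊤ ≤ I ∧ bracketSpan b ⊤ I ≤ I

/-- `N` is the nilradical: a nilpotent ideal containing every nilpotent ideal. -/
def IsNilradical (b : L →ₗ[ℂ] L →ₗ[ℂ] L) (N : Submodule ℂ L) : Prop :=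
  IsLeibnizIdeal b N ∧ IsNilpotentOn b N ∧
    ∀ J : Submodule ℂ L, IsLeibnizIdeal b J → IsNilpotentOn b J → J ≤ N

/-- `N` is null-filiform of dimension `n`: `dim N^i = n + 1 - i` for `1 ≤ i ≤ n + 1`. -/
def IsNullFiliform (b : L →ₗ[ℂ] L →ₗ[ℂ] L) (N : Submodule ℂ L) (n : ℕ) : Prop :=
  Module.finrank ℂ N = n ∧
    ∀ i : ℕ, 1 ≤ i → i ≤ n + 1 →
      Module.finrank ℂ (lowerCentral b N (i - 1)) = n + 1 - i

end LeibnizGeneralities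

/-- The bracket of the naturally graded filiform Leibniz algebra `F_n^1` on `Fin n → ℂ`
(with `e_i = Pi.single (i-1) 1` for `1 ≤ i ≤ n`): the only nonzero products of basis
vectors are `[e_i, e_1] = e_{i+1}` for `2 ≤ i ≤ n-1`. -/
def bracketF1 (n : ℕ) (u v : Fin n → ℂ) : Fin n → ℂ := fun j =>
  if 2 ≤ j.val then u ⟨j.val - 1, lt_of_le_of_lt (Nat.sub_le _ _) j.isLt⟩ * v ⟨0, lt_of_le_of_lt (Nat.zero_le _) j.isLt⟩ else 0

/-- The bracket of the naturally graded filiform Leibniz algebra `F_n^2` on `Fin n → ℂ`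
(with `e_i = Pi.single (i-1) 1` for `1 ≤ i ≤ n`): the only nonzero products of basis
vectors are `[e_1, e_1] = e_3` and `[e_i, e_1] = e_{i+1}` for `3 ≤ i ≤ n-1`. -/
def bracketF2 (n : ℕ) (u v : Fin n → ℂ) : Fin n → ℂ := fun j =>
  if j.val = 2 then u ⟨0, lt_of_le_of_lt (Nat.zero_le _) j.isLt⟩ * v ⟨0, lt_of_le_of_lt (Nat.zero_le _) j.isLt⟩
  else if 3 ≤ j.val then u ⟨j.val - 1, lt_of_le_of_lt (Nat.sub_le _ _) j.isLt⟩ * v ⟨0, lt_of_le_of_lt (Nat.zero_le _) j.isLt⟩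
  else 0
/-!
`R₁` is the `(n+2)`-dimensional complex solvable Leibniz algebra with basis
`e_1, …, e_n, x, y` and nonzero products `[e_i, e_1] = e_{i+1}` for `2 ≤ i ≤ n-1`,
`[e_1, x] = e_1`, `[x, e_1] = -e_1`, `[e_i, x] = (i-1) • e_i` for `2 ≤ i ≤ n`,
`[e_i, y] = e_i` for `2 ≤ i ≤ n`.  We realize it on `Fin (n+2) → ℂ`, where
`x = Pi.single 0 1`, `e_i = Pi.single i 1` for `1 ≤ i ≤ n` and
`y = Pi.single (Fin.last (n+1)) 1`, the bracket being given coordinatewise.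
-/

/-- The bracket of the Leibniz algebra `R₁` on `Fin (n+2) → ℂ`. -/
def bracketR1 (n : ℕ) (u v : Fin (n + 2) → ℂ) : Fin (n + 2) → ℂ := fun k =>
  if k.val = 1 then u 1 * v 0 - u 0 * v 1
  else if 2 ≤ k.val ∧ k.val ≤ n then
    (if 3 ≤ k.val then u ⟨k.val - 1, lt_of_le_of_lt (Nat.sub_le _ _) k.isLt⟩ * v 1 else 0)
      + ((k.val : ℂ) - 1) * u k * v 0 + u k * v (Fin.last (n + 1))
  else 0

/-!
`R₂` is the `(n+2)`-dimensional complex solvable Leibniz algebra with basis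
`e_1, …, e_n, x, y` and nonzero products `[e_1, e_1] = e_3`,
`[e_i, e_1] = e_{i+1}` for `3 ≤ i ≤ n-1`, `[e_1, x] = e_1`, `[x, e_1] = -e_1`,
`[e_i, x] = (i-1) • e_i` for `3 ≤ i ≤ n`, `[e_2, y] = e_2`, `[y, e_2] = -e_2`.
We realize it on `Fin (n+2) → ℂ`, where `x = Pi.single 0 1`,
`e_i = Pi.single i 1` for `1 ≤ i ≤ n` and `y = Pi.single (Fin.last (n+1)) 1`,
the bracket being given coordinatewise.
-/

/-- The bracket of the Leibniz algebra `R₂` on `Fin (n+2) → ℂ`. -/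
def bracketR2 (n : ℕ) (u v : Fin (n + 2) → ℂ) : Fin (n + 2) → ℂ := fun k =>
  if k.val = 1 then u 1 * v 0 - u 0 * v 1
  else if k.val = 2 then u 2 * v (Fin.last (n + 1)) - u (Fin.last (n + 1)) * v 2
  else if 3 ≤ k.val ∧ k.val ≤ n then
    (if 4 ≤ k.val then u ⟨k.val - 1, lt_of_le_of_lt (Nat.sub_le _ _) k.isLt⟩ * v 1
      else u 1 * v 1)
      + ((k.val : ℂ) - 1) * u k * v 0
  else 0

/-!
`R₃` is the `(n+2)`-dimensional complex solvable Leibniz algebra with basis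
`e_1, …, e_n, x, y` and nonzero products `[e_1, e_1] = e_3`,
`[e_i, e_1] = e_{i+1}` for `3 ≤ i ≤ n-1`, `[e_1, x] = e_1`, `[x, e_1] = -e_1`,
`[e_i, x] = (i-1) • e_i` for `3 ≤ i ≤ n`, `[e_2, y] = e_2`.
We realize it on `Fin (n+2) → ℂ`, where `x = Pi.single 0 1`,
`e_i = Pi.single i 1` for `1 ≤ i ≤ n` and `y = Pi.single (Fin.last (n+1)) 1`,
the bracket being given coordinatewise.
-/

/-- The bracket of the Leibniz algebra `R₃` on `Fin (n+2) → ℂ`. -/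
def bracketR3 (n : ℕ) (u v : Fin (n + 2) → ℂ) : Fin (n + 2) → ℂ := fun k =>
  if k.val = 1 then u 1 * v 0 - u 0 * v 1
  else if k.val = 2 then u 2 * v (Fin.last (n + 1))
  else if 3 ≤ k.val ∧ k.val ≤ n then
    (if 4 ≤ k.val then u ⟨k.val - 1, lt_of_le_of_lt (Nat.sub_le _ _) k.isLt⟩ * v 1
      else u 1 * v 1)
      + ((k.val : ℂ) - 1) * u k * v 0
  else 0


section Helpers

/-- The standard flag of `Fin n → ℂ`. -/
def flagV (n k : ℕ) : Submodule ℂ (Fin n → ℂ) where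
  carrier := {u | ∀ j : Fin n, j.val < k → u j = 0}
  add_mem' := by
    intro u v hu hv j hj
    simp [hu j hj, hv j hj]
  zero_mem' := by intro j _; rfl
  smul_mem' := by
    intro c u hu j hj
    simp [hu j hj]

theorem mem_flagV {n k : ℕ} {u : Fin n → ℂ} :
    u ∈ flagV n k ↔ ∀ j : Fin n, j.val < k → u j = 0 := Iff.rfl

variable {L : Type} [AddCommGroup L] [Module ℂ L]

/-- The right action of `L` on an ideal parametrized by `ψ`, triangular with diagonal `d`. -/
structure TriData (n : ℕ) (b : L →ₗ[ℂ] L →ₗ[ℂ] L) (ψ : (Fin n → ℂ) →ₗ[ℂ] L)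
    (D : L →ₗ[ℂ] (Fin n → ℂ) →ₗ[ℂ] (Fin n → ℂ)) (d : Fin n → L → ℂ) : Prop where
  leib : IsLeibnizBracket b
  inj : Function.Injective ψ
  ideal : IsLeibnizIdeal b (LinearMap.range ψ)
  hD : ∀ a u, ψ (D a u) = b (ψ u) a
  tri : ∀ a (k : Fin n) u, u ∈ flagV n k.val → D a u ∈ flagV n k.val ∧ D a u k = d k a * u k
  dN : ∀ k u, d k (ψ u) = 0

theorem bracket_mem {b : L →ₗ[ℂ] L →ₗ[ℂ] L} {A B : Submodule ℂ L} {u v : L} (hu : u ∈ A)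
    (hv : v ∈ B) : b u v ∈ bracketSpan b A B :=
  Submodule.subset_span ⟨u, hu, v, hv, rfl⟩

theorem bracketSpan_le {b : L →ₗ[ℂ] L →ₗ[ℂ] L} {A B C : Submodule ℂ L}
    (h : ∀ u ∈ A, ∀ v ∈ B, b u v ∈ C) : bracketSpan b A B ≤ C := by
  refine Submodule.span_le.2 ?_
  rintro z ⟨u, hu, v, hv, rfl⟩
  exact h u hu v hv

theorem exists_action (n : ℕ) (b : L →ₗ[ℂ] L →ₗ[ℂ] L) (ψ : (Fin n → ℂ) →ₗ[ℂ] L)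
    (hinj : Function.Injective ψ) (hI : IsLeibnizIdeal b (LinearMap.range ψ)) :
    ∃ D : L →ₗ[ℂ] (Fin n → ℂ) →ₗ[ℂ] (Fin n → ℂ), ∀ a u, ψ (D a u) = b (ψ u) a := by
  obtain ⟨g, hg⟩ := LinearMap.exists_leftInverse_of_injective ψ (LinearMap.ker_eq_bot.2 hinj)
  refine ⟨LinearMap.mk₂ ℂ (fun a u => g (b (ψ u) a)) (by intros; simp) (by intros; simp)
    (by intros; simp) (by intros; simp), ?_⟩
  intro a u
  have h1 : b (ψ u) a ∈ LinearMap.range ψ :=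
    hI.1 (bracket_mem (LinearMap.mem_range_self ψ u) Submodule.mem_top)
  obtain ⟨w, hw⟩ := h1
  have := LinearMap.congr_fun hg w
  simp at this
  simp [← hw, this]

namespace TriData

variable {n : ℕ} {b : L →ₗ[ℂ] L →ₗ[ℂ] L} {ψ : (Fin n → ℂ) →ₗ[ℂ] L}
    {D : L →ₗ[ℂ] (Fin n → ℂ) →ₗ[ℂ] (Fin n → ℂ)} {d : Fin n → L → ℂ}

theorem single_mem (k : Fin n) : (Pi.single k 1 : Fin n → ℂ) ∈ flagV n k.val := by
  intro j hj
  exact Pi.single_eq_of_ne (by intro h; subst h; exact lt_irrefl _ hj) _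

theorem d_eq (T : TriData n b ψ D d) (k : Fin n) (a : L) : d k a = D a (Pi.single k 1) k := by
  rw [(T.tri a k _ (single_mem k)).2]; simp

theorem d_add (T : TriData n b ψ D d) (k : Fin n) (a c : L) : d k (a + c) = d k a + d k c := by
  simp [T.d_eq]

theorem d_sub (T : TriData n b ψ D d) (k : Fin n) (a c : L) : d k (a - c) = d k a - d k c := by
  simp [T.d_eq]

theorem d_smul (T : TriData n b ψ D d) (k : Fin n) (s : ℂ) (a : L) :
    d k (s • a) = s * d k a := by
  simp [T.d_eq]

theorem d_bracket (T : TriData n b ψ D d) (k : Fin n) (a c : L) : d k (b a c) = 0 := by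
  have h : D (b a c) (Pi.single k 1) = D c (D a (Pi.single k 1)) - D a (D c (Pi.single k 1)) := by
    apply T.inj
    rw [map_sub, T.hD, T.hD, T.hD, T.hD, T.hD, T.leib]
    abel
  have ha := T.tri a k _ (single_mem k)
  have hc := T.tri c k _ (single_mem k)
  rw [T.d_eq, h, Pi.sub_apply, (T.tri c k _ ha.1).2, (T.tri a k _ hc.1).2, ha.2, hc.2]
  ring

theorem flag_step (T : TriData n b ψ D d) {a : L} (ha : ∀ k, d k a = 0) {k : ℕ}
    {u : Fin n → ℂ} (hu : u ∈ flagV n k) : D a u ∈ flagV n (k + 1) := by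
  intro j hj
  have hju : u ∈ flagV n j.val := fun i hi => hu i (by omega)
  rw [(T.tri a j u hju).2, ha, zero_mul]

theorem lc_le (T : TriData n b ψ D d) {J : Submodule ℂ L} (hJ : ∀ a ∈ J, ∀ k, d k a = 0)
    (hJJ : bracketSpan b J J ≤ LinearMap.range ψ) (k : ℕ) :
    lowerCentral b J (k + 1) ≤ (flagV n k).map ψ := by
  induction k with
  | zero =>
    refine le_trans hJJ ?_
    rintro _ ⟨u, rfl⟩
    exact ⟨u, fun j hj => absurd hj (Nat.not_lt_zero _), rfl⟩
  | succ k ih =>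
    refine bracketSpan_le ?_
    intro u hu v hv
    obtain ⟨u', hu', rfl⟩ := ih hu
    exact ⟨D v u', T.flag_step (hJ v hv) hu', T.hD v u'⟩

theorem nil_le (T : TriData n b ψ D d) {N : Submodule ℂ L} (hN : IsNilradical b N)
    (hr : LinearMap.range ψ = N) {J : Submodule ℂ L} (hI : IsLeibnizIdeal b J)
    (hJ : ∀ a ∈ J, ∀ k, d k a = 0) (hJJ : bracketSpan b J J ≤ N) : J ≤ N := by
  refine hN.2.2 J hI ⟨n + 1, ?_⟩
  rw [eq_bot_iff]
  refine le_trans (T.lc_le hJ (hr ▸ hJJ) n) ?_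
  rintro _ ⟨u, hu, rfl⟩
  have : u = 0 := by
    ext j
    exact hu j j.isLt
  simp [this]

theorem derived_ideal (hL : IsLeibnizBracket b) (s : ℕ) :
    IsLeibnizIdeal b (leibnizDerivedSeries b s) := by
  induction s with
  | zero => exact ⟨le_top, le_top⟩
  | succ s ih =>
    constructor
    · refine bracketSpan_le ?_
      intro u hu v _
      have : leibnizDerivedSeries b (s + 1) ≤
          (leibnizDerivedSeries b (s + 1)).comap (b.flip v) := by
        refine bracketSpan_le ?_
        intro p hp q hq
        show b (b p q) v ∈ leibnizDerivedSeries b (s + 1)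
        rw [hL p q v]
        exact add_mem (bracket_mem (ih.1 (bracket_mem hp Submodule.mem_top)) hq)
          (bracket_mem hp (ih.1 (bracket_mem hq Submodule.mem_top)))
      exact this hu
    · refine bracketSpan_le ?_
      intro v _ u hu
      have : leibnizDerivedSeries b (s + 1) ≤
          (leibnizDerivedSeries b (s + 1)).comap (b v) := by
        refine bracketSpan_le ?_
        intro p hp q hq
        show b v (b p q) ∈ leibnizDerivedSeries b (s + 1)
        have h : b v (b p q) = b (b v p) q - b (b v q) p := by
          rw [hL v p q]; abel
        rw [h]
        exact sub_mem (bracket_mem (ih.2 (bracket_mem Submodule.mem_top hp)) hq)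
          (bracket_mem (ih.2 (bracket_mem Submodule.mem_top hq)) hp)
      exact this hu

theorem derived_le (T : TriData n b ψ D d) {N : Submodule ℂ L} (hN : IsNilradical b N)
    (hr : LinearMap.range ψ = N) (s : ℕ) (h : leibnizDerivedSeries b (s + 2) ≤ N) :
    leibnizDerivedSeries b (s + 1) ≤ N := by
  have hD := derived_ideal T.leib (s + 1)
  have hNI := hN.1
  have key : leibnizDerivedSeries b (s + 1) ⊔ N ≤ N := by
    refine T.nil_le hN hr ?_ ?_ ?_
    · constructor
      · refine bracketSpan_le ?_
        intro u hu v hv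
        obtain ⟨p, hp, q, hq, rfl⟩ := Submodule.mem_sup.1 hu
        rw [map_add, LinearMap.add_apply]
        exact Submodule.add_mem_sup (hD.1 (bracket_mem hp hv)) (hNI.1 (bracket_mem hq hv))
      · refine bracketSpan_le ?_
        intro v hv u hu
        obtain ⟨p, hp, q, hq, rfl⟩ := Submodule.mem_sup.1 hu
        rw [map_add]
        exact Submodule.add_mem_sup (hD.2 (bracket_mem hv hp)) (hNI.2 (bracket_mem hv hq))
    · intro a ha k
      obtain ⟨p, hp, q, hq, rfl⟩ := Submodule.mem_sup.1 ha
      subst hr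
      obtain ⟨q, rfl⟩ := hq
      rw [T.d_add, T.dN, add_zero]
      let K : Submodule ℂ L := 
        { carrier := {a | d k a = 0}
          add_mem' := by intro a c ha hc; simp only [Set.mem_ofPred_eq] at *; rw [T.d_add, ha, hc, add_zero]
          zero_mem' := by
            have := T.dN k 0
            rwa [map_zero] at this
          smul_mem' := by intro s a ha; simp only [Set.mem_ofPred_eq] at *; rw [T.d_smul, ha, mul_zero] }
      have : leibnizDerivedSeries b (s + 1) ≤ K := bracketSpan_le (fun u _ v _ => T.d_bracket k u v)
      exact this hp
    · refine bracketSpan_le ?_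
      intro u hu v hv
      obtain ⟨p, hp, q, hq, rfl⟩ := Submodule.mem_sup.1 hu
      obtain ⟨p', hp', q', hq', rfl⟩ := Submodule.mem_sup.1 hv
      have he : b (p + q) (p' + q') = b p p' + b q p' + b (p + q) q' := by
        simp only [map_add, LinearMap.add_apply]
      rw [he]
      refine add_mem (add_mem (h (bracket_mem hp hp')) (hNI.1 (bracket_mem hq Submodule.mem_top)))
        (hNI.2 (bracket_mem Submodule.mem_top hq'))
  exact le_trans le_sup_left key

theorem sq_le (T : TriData n b ψ D d) {N : Submodule ℂ L} (hN : IsNilradical b N)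
    (hr : LinearMap.range ψ = N) (hs : IsSolvableBracket b) (u v : L) : b u v ∈ N := by
  obtain ⟨s, hs⟩ := hs
  have h1 : ∀ s, leibnizDerivedSeries b (s + 1) ≤ N → leibnizDerivedSeries b 1 ≤ N := by
    intro s
    induction s with
    | zero => exact id
    | succ s ih => exact fun h => ih (T.derived_le hN hr s h)
  have h2 : leibnizDerivedSeries b (s + 1) ≤ N := by
    refine bracketSpan_le ?_
    intro p hp q _
    rw [hs, Submodule.mem_bot] at hp
    rw [hp]; simp
  exact h1 s h2 (bracket_mem Submodule.mem_top Submodule.mem_top)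

theorem mem_of_d (T : TriData n b ψ D d) {N : Submodule ℂ L} (hN : IsNilradical b N)
    (hr : LinearMap.range ψ = N) (hs : IsSolvableBracket b) {a : L} (ha : ∀ k, d k a = 0) :
    a ∈ N := by
  let K : Submodule ℂ L := 
    { carrier := {a | ∀ k, d k a = 0}
      add_mem' := by intro a c ha hc k; rw [T.d_add, ha, hc, add_zero]
      zero_mem' := by
        intro k
        have := T.dN k 0
        rwa [map_zero] at this
      smul_mem' := by intro s a ha k; rw [T.d_smul, ha, mul_zero] }
  have hK : K ≤ N := T.nil_le hN hr
    ⟨bracketSpan_le (fun u _ v _ k => T.d_bracket k u v),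
      bracketSpan_le (fun u _ v _ k => T.d_bracket k u v)⟩ (fun a ha => ha)
    (bracketSpan_le (fun u _ v _ => T.sq_le hN hr hs u v))
  exact hK ha

/-- An eigenvector all of whose nonzero coordinates have the wrong weight vanishes. -/
theorem eig_zero (T : TriData n b ψ D d) {h : L} {w : ℂ} {u : Fin n → ℂ} (hu : D h u = w • u)
    (hw : ∀ j, u j = 0 ∨ d j h ≠ w) : u = 0 := by
  have key : ∀ k : ℕ, u ∈ flagV n k := by
    intro k
    induction k with
    | zero => exact fun j hj => absurd hj (Nat.not_lt_zero _)
    | succ k ih =>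
      intro j hj
      rcases Nat.lt_succ_iff_lt_or_eq.1 hj with hj | hj
      · exact ih j hj
      · subst hj
        have h2 := (T.tri h j u ih).2
        rw [hu, Pi.smul_apply, smul_eq_mul] at h2
        rcases hw j with h3 | h3
        · exact h3
        · by_contra h4
          exact h3 (mul_right_cancel₀ h4 h2).symm
  ext j
  exact key n j j.isLt

theorem exists_eig (T : TriData n b ψ D d) {h : L} (hd : Function.Injective fun k => d k h)
    (k : Fin n) : ∃ v ∈ flagV n k.val, v k = 1 ∧ D h v = d k h • v := by
  let A : (Fin n → ℂ) →ₗ[ℂ] (Fin n → ℂ) := D h - d k h • LinearMap.id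
  have hA : ∀ u ∈ flagV n k.val, A u ∈ flagV n (k.val + 1) := by
    intro u hu j hj
    rcases Nat.lt_succ_iff_lt_or_eq.1 hj with hj | hj
    · simp [A, (T.tri h k u hu).1 j hj, hu j hj]
    · have : j = k := Fin.ext hj
      subst this
      simp [A, (T.tri h j u hu).2]
  have hle : flagV n (k.val + 1) ≤ flagV n k.val := fun u hu j hj => hu j (by omega)
  let A' : flagV n (k.val + 1) →ₗ[ℂ] flagV n (k.val + 1) :=
    A.restrict (fun u hu => hA u (hle hu))
  have hinj : Function.Injective A' := by
    rw [← LinearMap.ker_eq_bot, LinearMap.ker_eq_bot']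
    intro u hu
    have h1 : A u.1 = 0 := congrArg Subtype.val hu
    have h2 : D h u.1 = d k h • u.1 := by
      simpa [A, sub_eq_zero] using h1
    apply Subtype.ext
    refine T.eig_zero h2 ?_
    intro j
    by_cases hj : j = k
    · left; exact u.2 j (by rw [hj]; omega)
    · right; exact fun h => hj (hd h)
  have hsurj := LinearMap.surjective_of_injective hinj
  obtain ⟨z, hz⟩ := hsurj ⟨A (Pi.single k 1), hA _ (single_mem k)⟩
  have hz' : A z.1 = A (Pi.single k 1) := congrArg Subtype.val hz
  refine ⟨Pi.single k 1 - z.1, sub_mem (single_mem k) (hle z.2), ?_, ?_⟩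
  · have : z.1 k = 0 := z.2 k (by omega)
    simp [this]
  · have : A (Pi.single k 1 - z.1) = 0 := by rw [map_sub, hz', sub_self]
    simpa [A, sub_eq_zero] using this

theorem eig_eq (T : TriData n b ψ D d) {h : L} (hd : Function.Injective fun k => d k h)
    {k : Fin n} {u v : Fin n → ℂ} (hv1 : v k = 1) (hv : D h v = d k h • v)
    (hu : D h u = d k h • u) : u = u k • v := by
  rw [← sub_eq_zero]
  refine T.eig_zero (h := h) (w := d k h) ?_ ?_
  · rw [map_sub, map_smul, hu, hv, smul_sub, smul_comm]
  · intro j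
    by_cases hj : j = k
    · left; subst hj; simp [hv1]
    · right; exact fun h => hj (hd h)

/-- Correct an element modulo the ideal so that it is killed by the right action of `h`. -/
theorem exists_H (T : TriData n b ψ D d) {h : L} (h0 : ∀ k, d k h ≠ 0)
    (hsq : ∀ u v, b u v ∈ LinearMap.range ψ) (a : L) :
    ∃ a', b a' h = 0 ∧ ∀ k, d k a' = d k a := by
  have hinj : Function.Injective (D h) := by
    rw [← LinearMap.ker_eq_bot, LinearMap.ker_eq_bot']
    intro u hu
    exact T.eig_zero (h := h) (w := 0) (by simp [hu]) (fun j => Or.inr (h0 j))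
  obtain ⟨w, hw⟩ := hsq a h
  obtain ⟨ν, hν⟩ := LinearMap.surjective_of_injective hinj w
  refine ⟨a - ψ ν, ?_, ?_⟩
  · rw [map_sub, LinearMap.sub_apply, ← T.hD, hν, hw, sub_self]
  · intro k
    rw [T.d_sub, T.dN, sub_zero]

theorem right_H (T : TriData n b ψ D d) {h : L} (hd : Function.Injective fun k => d k h)
    {k : Fin n} {v : Fin n → ℂ} (hvV : v ∈ flagV n k.val) (hv1 : v k = 1)
    (hv : D h v = d k h • v) {a : L} (ha : b a h = 0) : b (ψ v) a = d k a • ψ v := by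
  have h1 : D h (D a v) = d k h • D a v := by
    apply T.inj
    rw [T.hD, T.hD, T.leib, ha, map_zero, add_zero, ← T.hD h, ← T.hD a, hv, map_smul]
  have h2 := T.eig_eq hd hv1 hv h1
  rw [(T.tri a k v hvV).2, hv1, mul_one] at h2
  rw [← T.hD, h2, map_smul]

theorem left_H (T : TriData n b ψ D d) {h : L} (hd : Function.Injective fun k => d k h)
    (hsq : ∀ u v, b u v ∈ LinearMap.range ψ)
    {k : Fin n} {v : Fin n → ℂ} (hv1 : v k = 1)
    (hv : D h v = d k h • v) {a : L} (ha : b a h = 0) : ∃ q : ℂ, b a (ψ v) = q • ψ v := by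
  obtain ⟨u, hu⟩ := hsq a (ψ v)
  have h1 : D h u = d k h • u := by
    apply T.inj
    rw [T.hD, hu, T.leib, ha, map_zero, LinearMap.zero_apply, zero_add, ← T.hD h, hv, map_smul,
      map_smul, map_smul, hu]
  have h2 := T.eig_eq hd hv1 hv h1
  exact ⟨u k, by rw [← hu]; nth_rewrite 1 [h2]; rw [map_smul]⟩

theorem HH (T : TriData n b ψ D d) {h : L} (h0 : ∀ k, d k h ≠ 0)
    (hsq : ∀ u v, b u v ∈ LinearMap.range ψ) {a c : L} (ha : b a h = 0) (hc : b c h = 0) :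
    b a c = 0 := by
  obtain ⟨u, hu⟩ := hsq a c
  have h1 : D h u = (0 : ℂ) • u := by
    apply T.inj
    rw [T.hD, hu, T.leib, ha, hc]; simp
  have := T.eig_zero h1 (fun j => Or.inr (h0 j))
  rw [← hu, this, map_zero]

theorem span_eig {h : L} (hd : Function.Injective fun k => d k h)
    {v : Fin n → Fin n → ℂ} (hv1 : ∀ k, v k k = 1) (hv : ∀ k, D h (v k) = d k h • v k) :
    Submodule.span ℂ (Set.range v) = ⊤ := by
  have hli : LinearIndependent ℂ v := by
    refine Module.End.eigenvectors_linearIndependent' (D h) (fun k => d k h) hd v ?_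
    intro k
    refine ⟨Module.End.mem_eigenspace_iff.2 (hv k), ?_⟩
    intro h0
    have := hv1 k
    rw [h0] at this
    simp at this
  exact hli.span_eq_top_of_card_eq_finrank' (by simp)

/-- The final basis of `L`. -/
def finalFam (n : ℕ) (x y : L) (e : Fin n → L) : Fin (n + 2) → L := fun i =>
  if h0 : i.val = 0 then x else if h : i.val ≤ n then e ⟨i.val - 1, by omega⟩ else y

theorem exists_basis [FiniteDimensional ℂ L] (hdim : Module.finrank ℂ L = n + 2)
    {x y : L} {v : Fin n → Fin n → ℂ} (hv : Submodule.span ℂ (Set.range v) = ⊤)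
    (hxy : ∀ a : L, ∃ s t : ℂ, ∃ u, a = s • x + t • y + ψ u) :
    ∃ B : Module.Basis (Fin (n + 2)) ℂ L, ∀ i, B i = finalFam n x y (fun k => ψ (v k)) i := by
  have hspan : ⊤ ≤ Submodule.span ℂ (Set.range (finalFam n x y (fun k => ψ (v k)))) := by
    intro a _
    obtain ⟨s, t, u, rfl⟩ := hxy a
    refine add_mem (add_mem (Submodule.smul_mem _ _ (Submodule.subset_span ⟨0, ?_⟩))
      (Submodule.smul_mem _ _ (Submodule.subset_span ⟨Fin.last (n + 1), ?_⟩))) ?_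
    · simp [finalFam]
    · simp [finalFam]
    · have hu : u ∈ Submodule.span ℂ (Set.range v) := by rw [hv]; trivial
      have : Submodule.span ℂ (Set.range v) ≤
          (Submodule.span ℂ (Set.range (finalFam n x y (fun k => ψ (v k))))).comap ψ := by
        refine Submodule.span_le.2 ?_
        rintro _ ⟨k, rfl⟩
        refine Submodule.subset_span ⟨⟨k.val + 1, by omega⟩, ?_⟩
        have := k.isLt
        simp [finalFam]
      exact this hu
  refine ⟨basisOfTopLeSpanOfCardEqFinrank _ hspan (by simp [hdim]), ?_⟩
  intro i
  simp

end TriData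

/-- The isomorphism criterion: bilinear bracket agreeing on a basis. -/
theorem iso_of_table {m : ℕ} (b : L →ₗ[ℂ] L →ₗ[ℂ] L) (B : Module.Basis (Fin m) ℂ L)
    (F : (Fin m → ℂ) → (Fin m → ℂ) → Fin m → ℂ)
    (ha1 : ∀ u u' v, F (u + u') v = F u v + F u' v) (hs1 : ∀ (c : ℂ) u v, F (c • u) v = c • F u v)
    (ha2 : ∀ u v v', F u (v + v') = F u v + F u v') (hs2 : ∀ (c : ℂ) u v, F u (c • v) = c • F u v)
    (h : ∀ i j, B.equivFun (b (B i) (B j)) = F (Pi.single i 1) (Pi.single j 1)) :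
    ∃ φ : L ≃ₗ[ℂ] (Fin m → ℂ), ∀ u v : L, φ (b u v) = F (φ u) (φ v) := by
  refine ⟨B.equivFun, ?_⟩
  let F' := LinearMap.mk₂ ℂ F ha1 hs1 ha2 hs2
  have key : b.compr₂ B.equivFun.toLinearMap =
      F'.compl₁₂ B.equivFun.toLinearMap B.equivFun.toLinearMap := by
    refine B.ext fun i => B.ext fun j => ?_
    simp only [LinearMap.compr₂_apply, LinearMap.compl₁₂_apply, LinearEquiv.coe_coe, h, F',
      LinearMap.mk₂_apply]
    congr 1 <;> (ext k; simp [Pi.single_apply, eq_comm])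
  intro u v
  exact LinearMap.congr_fun₂ key u v

theorem fin_cases3 {n : ℕ} (i : Fin (n + 2)) :
    i = 0 ∨ (∃ k : Fin n, i = ⟨k.val + 1, by omega⟩) ∨ i = Fin.last (n + 1) := by
  by_cases h0 : i.val = 0
  · left; exact Fin.ext h0
  by_cases h : i.val ≤ n
  · right; left
    exact ⟨⟨i.val - 1, by omega⟩, Fin.ext (by simp; omega)⟩
  · right; right
    exact Fin.ext (by simp; omega)

theorem finalFam_zero (n : ℕ) (x y : L) (e : Fin n → L) : TriData.finalFam n x y e 0 = x := by
  simp [TriData.finalFam]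

theorem finalFam_last (n : ℕ) (x y : L) (e : Fin n → L) :
    TriData.finalFam n x y e (Fin.last (n + 1)) = y := by
  simp [TriData.finalFam]

theorem finalFam_mid (n : ℕ) (x y : L) (e : Fin n → L) (k : Fin n) :
    TriData.finalFam n x y e ⟨k.val + 1, by omega⟩ = e k := by
  simp [TriData.finalFam]

theorem sing {m : ℕ} (i k : Fin m) :
    (Pi.single i 1 : Fin m → ℂ) k = if k.val = i.val then 1 else 0 := by
  simp [Pi.single_apply, Fin.ext_iff]

theorem table_R1 {n : ℕ} (hn : 5 ≤ n) (b : L →ₗ[ℂ] L →ₗ[ℂ] L)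
    (x y : L) (e : Fin n → L) (B : Module.Basis (Fin (n + 2)) ℂ L)
    (hB : ∀ i, B i = TriData.finalFam n x y e i)
    (hxx : b x x = 0) (hxy : b x y = 0) (hyx : b y x = 0) (hyy : b y y = 0)
    (hex : ∀ k, b (e k) x = (if k.val = 0 then (1 : ℂ) else (k.val : ℂ)) • e k)
    (hey : ∀ k, b (e k) y = (if k.val = 0 then (0 : ℂ) else 1) • e k)
    (hxe : ∀ k, b x (e k) = (if k.val = 0 then (-1 : ℂ) else 0) • e k)
    (hye : ∀ k, b y (e k) = 0)
    (hee : ∀ i j, b (e i) (e j) = if h : j.val = 0 ∧ 1 ≤ i.val ∧ i.val + 1 < n then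
      e ⟨i.val + 1, h.2.2⟩ else 0) :
    ∃ φ : L ≃ₗ[ℂ] (Fin (n + 2) → ℂ), ∀ u v : L, φ (b u v) = bracketR1 n (φ u) (φ v) := by
  have B0 : B 0 = x := by rw [hB, finalFam_zero]
  have Bl : B (Fin.last (n + 1)) = y := by rw [hB, finalFam_last]
  have Bm : ∀ k : Fin n, e k = B ⟨k.val + 1, by omega⟩ := fun k => by rw [hB, finalFam_mid]
  refine iso_of_table b B (bracketR1 n) ?_ ?_ ?_ ?_ ?_
  · intro u u' v; ext k; simp only [bracketR1, Pi.add_apply]; split_ifs <;> ring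
  · intro c u v; ext k; simp only [bracketR1, Pi.smul_apply, smul_eq_mul]; split_ifs <;> ring
  · intro u v v'; ext k; simp only [bracketR1, Pi.add_apply]; split_ifs <;> ring
  · intro c u v; ext k; simp only [bracketR1, Pi.smul_apply, smul_eq_mul]; split_ifs <;> ring
  intro i j
  have key : ∀ i j : Fin (n + 2), ∀ m : Fin (n + 2), ∀ c : ℂ, b (B i) (B j) = c • B m →
      (∀ k, (if k.val = m.val then c else 0) = bracketR1 n (Pi.single i 1) (Pi.single j 1) k) →
      B.equivFun (b (B i) (B j)) = bracketR1 n (Pi.single i 1) (Pi.single j 1) := by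
    intro i j m c h1 h2
    ext k
    rw [← h2 k, h1]
    simp [Finsupp.single_apply, Fin.ext_iff, eq_comm]
  rcases fin_cases3 i with rfl | ⟨p, rfl⟩ | rfl <;> rcases fin_cases3 j with rfl | ⟨q, rfl⟩ | rfl
  · refine key _ _ 0 0 (by rw [B0, hxx, zero_smul]) ?_
    intro k
    rcases k with ⟨k, hk⟩
    simp only [bracketR1, sing, Fin.val_zero, Fin.val_one, Fin.val_last]
    clear * - hn hk
    grind
  · have hql := q.isLt
    refine key _ _ ⟨q.val + 1, by omega⟩ _ (by rw [B0, ← Bm, hxe]) ?_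
    intro k
    rcases k with ⟨k, hk⟩
    simp only [bracketR1, sing, Fin.val_zero, Fin.val_one, Fin.val_last]
    clear * - hn hql hk
    grind
  · refine key _ _ 0 0 (by rw [B0, Bl, hxy, zero_smul]) ?_
    intro k
    rcases k with ⟨k, hk⟩
    simp only [bracketR1, sing, Fin.val_zero, Fin.val_one, Fin.val_last]
    clear * - hn hk
    grind
  · have hpl := p.isLt
    refine key _ _ ⟨p.val + 1, by omega⟩ _ (by rw [B0, ← Bm, hex]) ?_
    intro k
    rcases k with ⟨k, hk⟩
    simp only [bracketR1, sing, Fin.val_zero, Fin.val_one, Fin.val_last]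
    clear * - hn hpl hk
    by_cases hkp : k = p.val + 1
    · subst hkp
      push_cast
      grind
    · grind
  · have hpl := p.isLt
    have hql := q.isLt
    by_cases h : q.val = 0 ∧ 1 ≤ p.val ∧ p.val + 1 < n
    · refine key _ _ ⟨p.val + 2, by omega⟩ 1 (by rw [← Bm, ← Bm, hee, dif_pos h, Bm, one_smul]) ?_
      intro k
      rcases k with ⟨k, hk⟩
      simp only [bracketR1, sing, Fin.val_zero, Fin.val_one, Fin.val_last]
      clear * - hn hpl hql h hk
      grind
    · refine key _ _ 0 0 (by rw [← Bm, ← Bm, hee, dif_neg h, zero_smul]) ?_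
      intro k
      rcases k with ⟨k, hk⟩
      simp only [bracketR1, sing, Fin.val_zero, Fin.val_one, Fin.val_last]
      clear * - hn hpl hql h hk
      grind
  · have hpl := p.isLt
    refine key _ _ ⟨p.val + 1, by omega⟩ _ (by rw [Bl, ← Bm, hey]) ?_
    intro k
    rcases k with ⟨k, hk⟩
    simp only [bracketR1, sing, Fin.val_zero, Fin.val_one, Fin.val_last]
    clear * - hn hpl hk
    grind
  · refine key _ _ 0 0 (by rw [Bl, B0, hyx, zero_smul]) ?_
    intro k
    rcases k with ⟨k, hk⟩
    simp only [bracketR1, sing, Fin.val_zero, Fin.val_one, Fin.val_last]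
    clear * - hn hk
    grind
  · have hql := q.isLt
    refine key _ _ 0 0 (by rw [Bl, ← Bm, hye, zero_smul]) ?_
    intro k
    rcases k with ⟨k, hk⟩
    simp only [bracketR1, sing, Fin.val_zero, Fin.val_one, Fin.val_last]
    clear * - hn hql hk
    grind
  · refine key _ _ 0 0 (by rw [Bl, hyy, zero_smul]) ?_
    intro k
    rcases k with ⟨k, hk⟩
    simp only [bracketR1, sing, Fin.val_zero, Fin.val_one, Fin.val_last]
    clear * - hn hk
    grind


/-- Common form of the brackets of `R₂` and `R₃`. -/
def bracketR23 (n : ℕ) (c₀ : ℂ) (u v : Fin (n + 2) → ℂ) : Fin (n + 2) → ℂ := fun k =>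
  if k.val = 1 then u 1 * v 0 - u 0 * v 1
  else if k.val = 2 then u 2 * v (Fin.last (n + 1)) - c₀ * (u (Fin.last (n + 1)) * v 2)
  else if 3 ≤ k.val ∧ k.val ≤ n then
    (if 4 ≤ k.val then u ⟨k.val - 1, lt_of_le_of_lt (Nat.sub_le _ _) k.isLt⟩ * v 1
      else u 1 * v 1)
      + ((k.val : ℂ) - 1) * u k * v 0
  else 0

theorem bracketR23_one (n : ℕ) (u v : Fin (n + 2) → ℂ) : bracketR23 n 1 u v = bracketR2 n u v := by
  ext k; simp only [bracketR23, bracketR2, one_mul]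

theorem bracketR23_zero (n : ℕ) (u v : Fin (n + 2) → ℂ) :
    bracketR23 n 0 u v = bracketR3 n u v := by
  ext k; simp only [bracketR23, bracketR3, zero_mul, sub_zero]

theorem table_R23 {n : ℕ} (c₀ : ℂ) (hn : 5 ≤ n) (b : L →ₗ[ℂ] L →ₗ[ℂ] L)
    (x y : L) (e : Fin n → L) (B : Module.Basis (Fin (n + 2)) ℂ L)
    (hB : ∀ i, B i = TriData.finalFam n x y e i)
    (hxx : b x x = 0) (hxy : b x y = 0) (hyx : b y x = 0) (hyy : b y y = 0)
    (hex : ∀ k, b (e k) x = (if k.val = 0 then (1 : ℂ) else if k.val = 1 then 0 else (k.val : ℂ)) • e k)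
    (hey : ∀ k, b (e k) y = (if k.val = 1 then (1 : ℂ) else 0) • e k)
    (hxe : ∀ k, b x (e k) = (if k.val = 0 then (-1 : ℂ) else 0) • e k)
    (hye : ∀ k, b y (e k) = (if k.val = 1 then -c₀ else 0) • e k)
    (hee0 : ∀ i j, i.val = 0 → j.val = 0 → b (e i) (e j) = e ⟨2, by omega⟩)
    (hee1 : ∀ i j, j.val = 0 → 2 ≤ i.val → ∀ h : i.val + 1 < n, b (e i) (e j) = e ⟨i.val + 1, h⟩)
    (hee2 : ∀ i j, ¬ (j.val = 0 ∧ (i.val = 0 ∨ (2 ≤ i.val ∧ i.val + 1 < n))) → b (e i) (e j) = 0) :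
    ∃ φ : L ≃ₗ[ℂ] (Fin (n + 2) → ℂ), ∀ u v : L, φ (b u v) = bracketR23 n c₀ (φ u) (φ v) := by
  have B0 : B 0 = x := by rw [hB, finalFam_zero]
  have Bl : B (Fin.last (n + 1)) = y := by rw [hB, finalFam_last]
  have Bm : ∀ k : Fin n, e k = B ⟨k.val + 1, by omega⟩ := fun k => by rw [hB, finalFam_mid]
  refine iso_of_table b B (bracketR23 n c₀) ?_ ?_ ?_ ?_ ?_
  · intro u u' v; ext k; simp only [bracketR23, Pi.add_apply]; split_ifs <;> ring
  · intro c u v; ext k; simp only [bracketR23, Pi.smul_apply, smul_eq_mul]; split_ifs <;> ring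
  · intro u v v'; ext k; simp only [bracketR23, Pi.add_apply]; split_ifs <;> ring
  · intro c u v; ext k; simp only [bracketR23, Pi.smul_apply, smul_eq_mul]; split_ifs <;> ring
  have h2v : (2 : Fin (n + 2)).val = 2 := by
    change 2 % (n + 2) = 2
    exact Nat.mod_eq_of_lt (by omega)
  intro i j
  have key : ∀ i j : Fin (n + 2), ∀ m : Fin (n + 2), ∀ c : ℂ, b (B i) (B j) = c • B m →
      (∀ k, (if k.val = m.val then c else 0) = bracketR23 n c₀ (Pi.single i 1) (Pi.single j 1) k) →
      B.equivFun (b (B i) (B j)) = bracketR23 n c₀ (Pi.single i 1) (Pi.single j 1) := by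
    intro i j m c h1 h2
    ext k
    rw [← h2 k, h1]
    simp [Finsupp.single_apply, Fin.ext_iff, eq_comm]
  rcases fin_cases3 i with rfl | ⟨p, rfl⟩ | rfl <;> rcases fin_cases3 j with rfl | ⟨q, rfl⟩ | rfl
  · refine key _ _ 0 0 (by rw [B0, hxx, zero_smul]) ?_
    intro k
    rcases k with ⟨k, hk⟩
    simp only [bracketR23, sing, Fin.val_zero, Fin.val_one, h2v, Fin.val_last]
    clear * - hn hk
    grind
  · have hql := q.isLt
    refine key _ _ ⟨q.val + 1, by omega⟩ _ (by rw [B0, ← Bm, hxe]) ?_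
    intro k
    rcases k with ⟨k, hk⟩
    simp only [bracketR23, sing, Fin.val_zero, Fin.val_one, h2v, Fin.val_last]
    clear * - hn hql hk
    grind
  · refine key _ _ 0 0 (by rw [B0, Bl, hxy, zero_smul]) ?_
    intro k
    rcases k with ⟨k, hk⟩
    simp only [bracketR23, sing, Fin.val_zero, Fin.val_one, h2v, Fin.val_last]
    clear * - hn hk
    grind
  · have hpl := p.isLt
    refine key _ _ ⟨p.val + 1, by omega⟩ _ (by rw [B0, ← Bm, hex]) ?_
    intro k
    rcases k with ⟨k, hk⟩
    simp only [bracketR23, sing, Fin.val_zero, Fin.val_one, h2v, Fin.val_last]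
    clear * - hn hpl hk
    by_cases hkp : k = p.val + 1
    · subst hkp
      push_cast
      grind
    · grind
  · have hpl := p.isLt
    have hql := q.isLt
    by_cases h : q.val = 0 ∧ (p.val = 0 ∨ (2 ≤ p.val ∧ p.val + 1 < n))
    · rcases h with ⟨h, h' | ⟨h', h''⟩⟩
      · refine key _ _ ⟨3, by omega⟩ 1 (by rw [← Bm, ← Bm, hee0 _ _ h' h, Bm, one_smul]) ?_
        intro k
        rcases k with ⟨k, hk⟩
        simp only [bracketR23, sing, Fin.val_zero, Fin.val_one, h2v, Fin.val_last]
        clear * - hn hpl hql h h' hk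
        grind
      · refine key _ _ ⟨p.val + 2, by omega⟩ 1
          (by rw [← Bm, ← Bm, hee1 _ _ h h' h'', Bm, one_smul]) ?_
        intro k
        rcases k with ⟨k, hk⟩
        simp only [bracketR23, sing, Fin.val_zero, Fin.val_one, h2v, Fin.val_last]
        clear * - hn hpl hql h h' h'' hk
        grind
    · refine key _ _ 0 0 (by rw [← Bm, ← Bm, hee2 _ _ h, zero_smul]) ?_
      intro k
      rcases k with ⟨k, hk⟩
      simp only [bracketR23, sing, Fin.val_zero, Fin.val_one, h2v, Fin.val_last]
      clear * - hn hpl hql h hk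
      grind
  · have hpl := p.isLt
    refine key _ _ ⟨p.val + 1, by omega⟩ _ (by rw [Bl, ← Bm, hey]) ?_
    intro k
    rcases k with ⟨k, hk⟩
    simp only [bracketR23, sing, Fin.val_zero, Fin.val_one, h2v, Fin.val_last]
    clear * - hn hpl hk
    grind
  · refine key _ _ 0 0 (by rw [Bl, B0, hyx, zero_smul]) ?_
    intro k
    rcases k with ⟨k, hk⟩
    simp only [bracketR23, sing, Fin.val_zero, Fin.val_one, h2v, Fin.val_last]
    clear * - hn hk
    grind
  · have hql := q.isLt
    refine key _ _ ⟨q.val + 1, by omega⟩ _ (by rw [Bl, ← Bm, hye]) ?_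
    intro k
    rcases k with ⟨k, hk⟩
    simp only [bracketR23, sing, Fin.val_zero, Fin.val_one, h2v, Fin.val_last]
    clear * - hn hql hk
    grind
  · refine key _ _ 0 0 (by rw [Bl, hyy, zero_smul]) ?_
    intro k
    rcases k with ⟨k, hk⟩
    simp only [bracketR23, sing, Fin.val_zero, Fin.val_one, h2v, Fin.val_last]
    clear * - hn hk
    grind


theorem tri_F1 {n : ℕ} (hn : 5 ≤ n) (D : (Fin n → ℂ) →ₗ[ℂ] (Fin n → ℂ))
    (der : ∀ u v, D (bracketF1 n u v) = bracketF1 n (D u) v + bracketF1 n u (D v))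
    (k : Fin n) (u : Fin n → ℂ) (hu : u ∈ flagV n k.val) :
    D u ∈ flagV n k.val ∧ D u k = (if k.val = 0 then D (Pi.single ⟨0, by omega⟩ 1) ⟨0, by omega⟩
      else D (Pi.single ⟨1, by omega⟩ 1) ⟨1, by omega⟩ + ((k.val : ℂ) - 1) *
        D (Pi.single ⟨0, by omega⟩ 1) ⟨0, by omega⟩) * u k := by
  have h00 : 0 < n := by omega
  have h11 : 1 < n := by omega
  set α := D (Pi.single ⟨0, h00⟩ 1) ⟨0, h00⟩ with hα
  set β := D (Pi.single ⟨1, h11⟩ 1) ⟨1, h11⟩ with hβ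
  have c1 : ∀ v : Fin n → ℂ, v ⟨0, h00⟩ = 0 → D v ⟨0, h00⟩ = 0 := by
    intro v hv
    have h1 := der (Pi.single ⟨1, h11⟩ 1) v
    have h2 : ∀ u, bracketF1 n u v = 0 := by
      intro u; ext j; simp [bracketF1, hv]
    rw [h2, h2, map_zero] at h1
    have h3 := congrFun h1 ⟨2, by omega⟩
    simpa [bracketF1] using h3.symm
  have c2 : ∀ u ∈ flagV n 2, ∃ u' : Fin n → ℂ,
      (∀ j : Fin n, u' j = if h : 1 ≤ j.val ∧ j.val + 1 < n then u ⟨j.val + 1, h.2⟩ else 0) ∧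
      ∀ j : Fin n, D u j = if 2 ≤ j.val then D u' ⟨j.val - 1, by omega⟩ + α * u j else 0 := by
    intro u hu
    refine ⟨fun j => if h : 1 ≤ j.val ∧ j.val + 1 < n then u ⟨j.val + 1, h.2⟩ else 0,
      fun j => rfl, ?_⟩
    set u' : Fin n → ℂ := fun j => if h : 1 ≤ j.val ∧ j.val + 1 < n then u ⟨j.val + 1, h.2⟩ else 0
      with hu'
    have hsh : ∀ j : Fin n, 2 ≤ j.val → u' ⟨j.val - 1, by omega⟩ = u j := by
      intro j hj
      have h2 : 1 ≤ j.val - 1 ∧ j.val - 1 + 1 < n := by omega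
      simp only [hu']
      rw [dif_pos h2]
      congr 1
      exact Fin.ext (by simp; omega)
    have h1 : bracketF1 n u' (Pi.single ⟨0, h00⟩ 1) = u := by
      ext j
      simp only [bracketF1]
      split_ifs with hj
      · rw [hsh j hj]; simp
      · exact (hu j (by omega)).symm
    intro j
    have h2 := congrFun (der u' (Pi.single ⟨0, h00⟩ 1)) j
    rw [h1] at h2
    rw [h2]
    simp only [bracketF1, Pi.add_apply]
    split_ifs with hj
    · rw [hsh j hj, ← hα]; simp [mul_comm]
    · simp
  have c3 : ∀ u ∈ flagV n 1, D u ∈ flagV n 1 ∧ D u ⟨1, h11⟩ = β * u ⟨1, h11⟩ := by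
    intro u hu
    constructor
    · intro j hj
      have : j = ⟨0, h00⟩ := Fin.ext (by simp; omega)
      rw [this]
      exact c1 u (hu _ (by simp))
    · have h2 : u - u ⟨1, h11⟩ • Pi.single ⟨1, h11⟩ 1 ∈ flagV n 2 := by
        intro j hj
        rcases (by omega : j.val = 0 ∨ j.val = 1) with h | h
        · have : j = ⟨0, h00⟩ := Fin.ext h
          subst this
          simp [hu ⟨0, h00⟩ (by simp)]
        · have : j = ⟨1, h11⟩ := Fin.ext h
          subst this
          simp
      obtain ⟨u', -, hu'⟩ := c2 _ h2
      have h3 := hu' ⟨1, h11⟩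
      simp [← hβ, sub_eq_zero] at h3
      rw [h3, mul_comm]
  have c4 : ∀ k : ℕ, ∀ u ∈ flagV n (k + 1), D u ∈ flagV n (k + 1) ∧ ∀ hk : k + 1 < n,
      D u ⟨k + 1, hk⟩ = (β + k * α) * u ⟨k + 1, hk⟩ := by
    intro k
    induction k with
    | zero =>
      intro u hu
      refine ⟨(c3 u hu).1, fun hk => ?_⟩
      have := (c3 u hu).2
      simpa using this
    | succ k ih =>
      intro u hu
      obtain ⟨u', h1, h2⟩ := c2 u (fun j hj => hu j (by omega))
      have hu'V : u' ∈ flagV n (k + 1) := by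
        intro j hj
        rw [h1]
        split_ifs with h
        · exact hu _ (by simp; omega)
        · rfl
      obtain ⟨h3, h4⟩ := ih u' hu'V
      constructor
      · intro j hj
        rw [h2, hu j hj]
        split_ifs with h
        · rw [h3 _ (by simp; omega)]; simp
        · rfl
      · intro hk
        rw [h2, if_pos (by simp)]
        have h5 := h4 (by omega)
        rw [h1, dif_pos (by simp; omega)] at h5
        simp only [Nat.add_sub_cancel]
        rw [h5]
        push_cast
        ring
  rcases Nat.eq_zero_or_pos k.val with h | h
  · have hk : k = ⟨0, h00⟩ := Fin.ext h
    subst hk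
    refine ⟨fun j hj => absurd hj (Nat.not_lt_zero _), ?_⟩
    have h2 := c1 (u - u ⟨0, h00⟩ • Pi.single ⟨0, h00⟩ 1) (by simp)
    simp [← hα, sub_eq_zero] at h2
    simp [h2, mul_comm]
  · have h1 := c4 (k.val - 1) u (by rwa [Nat.sub_add_cancel h])
    rw [Nat.sub_add_cancel h] at h1
    refine ⟨h1.1, ?_⟩
    have h2 : D u k = _ * u k := h1.2 k.isLt
    rw [h2, if_neg (by omega), Nat.cast_sub h]
    simp

theorem tri_F2 {n : ℕ} (hn : 5 ≤ n) (D : (Fin n → ℂ) →ₗ[ℂ] (Fin n → ℂ))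
    (der : ∀ u v, D (bracketF2 n u v) = bracketF2 n (D u) v + bracketF2 n u (D v))
    (k : Fin n) (u : Fin n → ℂ) (hu : u ∈ flagV n k.val) :
    D u ∈ flagV n k.val ∧ D u k = (if k.val = 0 then D (Pi.single ⟨0, by omega⟩ 1) ⟨0, by omega⟩
      else if k.val = 1 then D (Pi.single ⟨1, by omega⟩ 1) ⟨1, by omega⟩ else (k.val : ℂ) *
        D (Pi.single ⟨0, by omega⟩ 1) ⟨0, by omega⟩) * u k := by
  have h00 : 0 < n := by omega
  have h11 : 1 < n := by omega
  set α := D (Pi.single ⟨0, h00⟩ 1) ⟨0, h00⟩ with hα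
  set β := D (Pi.single ⟨1, h11⟩ 1) ⟨1, h11⟩ with hβ
  have c1 : ∀ v : Fin n → ℂ, v ⟨0, h00⟩ = 0 → D v ⟨0, h00⟩ = 0 := by
    intro v hv
    have h1 := der (Pi.single ⟨0, h00⟩ 1) v
    have h2 : ∀ u, bracketF2 n u v = 0 := by
      intro u; ext j; simp [bracketF2, hv]
    rw [h2, h2, map_zero] at h1
    have h3 := congrFun h1 ⟨2, by omega⟩
    simpa [bracketF2] using h3.symm
  have c0 : ∀ u : Fin n → ℂ, D u ⟨0, h00⟩ = α * u ⟨0, h00⟩ := by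
    intro u
    have h2 := c1 (u - u ⟨0, h00⟩ • Pi.single ⟨0, h00⟩ 1) (by simp)
    simp [← hα, sub_eq_zero] at h2
    simp [h2, mul_comm]
  have c2 : ∀ u ∈ flagV n 2, ∃ u' : Fin n → ℂ,
      (∀ j : Fin n, u' j = if j.val = 0 then u ⟨2, by omega⟩ else
        if h : 2 ≤ j.val ∧ j.val + 1 < n then u ⟨j.val + 1, h.2⟩ else 0) ∧
      ∀ j : Fin n, D u j = if j.val = 2 then D u' ⟨0, h00⟩ + α * u j else
        if 3 ≤ j.val then D u' ⟨j.val - 1, by omega⟩ + α * u j else 0 := by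
    intro u hu
    refine ⟨fun j => if j.val = 0 then u ⟨2, by omega⟩ else
        if h : 2 ≤ j.val ∧ j.val + 1 < n then u ⟨j.val + 1, h.2⟩ else 0,
      fun j => rfl, ?_⟩
    set u' : Fin n → ℂ := fun j => if j.val = 0 then u ⟨2, by omega⟩ else
        if h : 2 ≤ j.val ∧ j.val + 1 < n then u ⟨j.val + 1, h.2⟩ else 0
      with hu'
    have hs2 : ∀ j : Fin n, j.val = 2 → u' ⟨0, h00⟩ = u j := by
      intro j hj
      simp only [hu', if_true]
      congr 1
      exact Fin.ext hj.symm
    have hsh : ∀ j : Fin n, 3 ≤ j.val → u' ⟨j.val - 1, by omega⟩ = u j := by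
      intro j hj
      have h2 : 2 ≤ j.val - 1 ∧ j.val - 1 + 1 < n := by omega
      simp only [hu']
      rw [if_neg (by omega), dif_pos h2]
      congr 1
      exact Fin.ext (by simp; omega)
    have h1 : bracketF2 n u' (Pi.single ⟨0, h00⟩ 1) = u := by
      ext j
      simp only [bracketF2]
      split_ifs with hj hj
      · rw [hs2 j hj]; simp
      · rw [hsh j hj]; simp
      · exact (hu j (by omega)).symm
    intro j
    have h2 := congrFun (der u' (Pi.single ⟨0, h00⟩ 1)) j
    rw [h1] at h2
    rw [h2]
    simp only [bracketF2, Pi.add_apply]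
    split_ifs with hj hj
    · rw [hs2 j hj, ← hα]; simp [mul_comm]
    · rw [hsh j hj, ← hα]; simp [mul_comm]
    · simp
  have c3 : ∀ u ∈ flagV n 1, D u ∈ flagV n 1 ∧ D u ⟨1, h11⟩ = β * u ⟨1, h11⟩ := by
    intro u hu
    constructor
    · intro j hj
      have : j = ⟨0, h00⟩ := Fin.ext (by simp; omega)
      rw [this]
      exact c1 u (hu _ (by simp))
    · have h2 : u - u ⟨1, h11⟩ • Pi.single ⟨1, h11⟩ 1 ∈ flagV n 2 := by
        intro j hj
        rcases (by omega : j.val = 0 ∨ j.val = 1) with h | h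
        · have : j = ⟨0, h00⟩ := Fin.ext h
          subst this
          simp [hu ⟨0, h00⟩ (by simp)]
        · have : j = ⟨1, h11⟩ := Fin.ext h
          subst this
          simp
      obtain ⟨u', -, hu'⟩ := c2 _ h2
      have h3 := hu' ⟨1, h11⟩
      simp [← hβ, sub_eq_zero] at h3
      rw [h3, mul_comm]
  have c4 : ∀ k : ℕ, ∀ u ∈ flagV n (k + 2), D u ∈ flagV n (k + 2) ∧ ∀ hk : k + 2 < n,
      D u ⟨k + 2, hk⟩ = ((k + 2) * α) * u ⟨k + 2, hk⟩ := by
    intro k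
    induction k with
    | zero =>
      intro u hu
      obtain ⟨u', h1, h2⟩ := c2 u hu
      constructor
      · intro j hj
        rw [h2, if_neg (by omega), if_neg (by omega)]
      · intro hk
        rw [h2, c0, h1]
        simp
        ring
    | succ k ih =>
      intro u hu
      obtain ⟨u', h1, h2⟩ := c2 u (fun j hj => hu j (by omega))
      have hu'V : u' ∈ flagV n (k + 2) := by
        intro j hj
        rw [h1]
        split_ifs with h h
        · exact hu _ (by simp)
        · exact hu _ (by simp; omega)
        · rfl
      obtain ⟨h3, h4⟩ := ih u' hu'V
      constructor
      · intro j hj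
        rw [h2, hu j hj]
        split_ifs with h h
        · rw [h3 _ (by simp)]; simp
        · rw [h3 _ (by simp; omega)]; simp
        · rfl
      · intro hk
        rw [h2, if_neg (by simp), if_pos (by simp)]
        have h5 := h4 (by omega)
        rw [h1, if_neg (by simp), dif_pos (by simp; omega)] at h5
        have h6 : (⟨k + 1 + 2 - 1, by omega⟩ : Fin n) = ⟨k + 2, by omega⟩ := Fin.ext (by simp)
        simp only [h6]
        rw [h5]
        have h7 : (⟨k + 2 + 1, by omega⟩ : Fin n) = ⟨k + 1 + 2, by omega⟩ := Fin.ext (by simp)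
        simp only [h7]
        push_cast
        ring
  rcases Nat.eq_zero_or_pos k.val with h | h
  · have hk : k = ⟨0, h00⟩ := Fin.ext h
    subst hk
    refine ⟨fun j hj => absurd hj (Nat.not_lt_zero _), ?_⟩
    rw [c0]; simp
  by_cases h1 : k.val = 1
  · have hk : k = ⟨1, h11⟩ := Fin.ext h1
    subst hk
    refine ⟨(c3 u hu).1, ?_⟩
    rw [(c3 u hu).2]; simp
  · have h2 : 2 ≤ k.val := by omega
    have h1 := c4 (k.val - 2) u (by rwa [Nat.sub_add_cancel h2])
    rw [Nat.sub_add_cancel h2] at h1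
    refine ⟨h1.1, ?_⟩
    have h4 : D u k = _ * u k := h1.2 k.isLt
    rw [h4, if_neg (by omega), if_neg (by omega), Nat.cast_sub h2]
    simp


theorem exists_tri_F1 {n : ℕ} (hn : 5 ≤ n) {b : L →ₗ[ℂ] L →ₗ[ℂ] L} (hL : IsLeibnizBracket b)
    {ψ : (Fin n → ℂ) →ₗ[ℂ] L} (hinj : Function.Injective ψ)
    (hI : IsLeibnizIdeal b (LinearMap.range ψ))
    (hψ : ∀ u v, ψ (bracketF1 n u v) = b (ψ u) (ψ v)) :
    ∃ (D : L →ₗ[ℂ] (Fin n → ℂ) →ₗ[ℂ] (Fin n → ℂ)) (d : Fin n → L → ℂ) (α β : L →ₗ[ℂ] ℂ),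
      TriData n b ψ D d ∧ ∀ k a, d k a = (if k.val = 0 then 1 else (k.val : ℂ) - 1) * α a +
        (if k.val = 0 then 0 else 1) * β a := by
  obtain ⟨D, hD⟩ := exists_action n b ψ hinj hI
  have h00 : 0 < n := by omega
  have h11 : 1 < n := by omega
  have hDN : ∀ u v, D (ψ v) u = bracketF1 n u v := by
    intro u v
    apply hinj
    rw [hD, hψ]
  have hder : ∀ a u v, D a (bracketF1 n u v) = bracketF1 n (D a u) v + bracketF1 n u (D a v) := by
    intro a u v
    apply hinj
    rw [map_add, hD, hψ, hψ, hψ, hD, hD, hL]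
  have hT := fun a => tri_F1 hn (D a) (hder a)
  refine ⟨D, fun k a => (if k.val = 0 then 1 else (k.val : ℂ) - 1) *
      D a (Pi.single ⟨0, h00⟩ 1) ⟨0, h00⟩ + (if k.val = 0 then 0 else 1) *
      D a (Pi.single ⟨1, h11⟩ 1) ⟨1, h11⟩,
    LinearMap.proj ⟨0, h00⟩ ∘ₗ D.flip (Pi.single ⟨0, h00⟩ 1),
    LinearMap.proj ⟨1, h11⟩ ∘ₗ D.flip (Pi.single ⟨1, h11⟩ 1),
    ⟨hL, hinj, hI, hD, ?_, ?_⟩, ?_⟩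
  · intro a k u hu
    refine ⟨(hT a k u hu).1, ?_⟩
    rw [(hT a k u hu).2]
    split_ifs <;> ring
  · intro k u
    simp only [hDN, bracketF1]
    simp
  · intro k a
    simp

theorem exists_tri_F2 {n : ℕ} (hn : 5 ≤ n) {b : L →ₗ[ℂ] L →ₗ[ℂ] L} (hL : IsLeibnizBracket b)
    {ψ : (Fin n → ℂ) →ₗ[ℂ] L} (hinj : Function.Injective ψ)
    (hI : IsLeibnizIdeal b (LinearMap.range ψ))
    (hψ : ∀ u v, ψ (bracketF2 n u v) = b (ψ u) (ψ v)) :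
    ∃ (D : L →ₗ[ℂ] (Fin n → ℂ) →ₗ[ℂ] (Fin n → ℂ)) (d : Fin n → L → ℂ) (α β : L →ₗ[ℂ] ℂ),
      TriData n b ψ D d ∧ ∀ k a, d k a =
        (if k.val = 0 then 1 else if k.val = 1 then 0 else (k.val : ℂ)) * α a +
        (if k.val = 1 then 1 else 0) * β a := by
  obtain ⟨D, hD⟩ := exists_action n b ψ hinj hI
  have h00 : 0 < n := by omega
  have h11 : 1 < n := by omega
  have hDN : ∀ u v, D (ψ v) u = bracketF2 n u v := by
    intro u v
    apply hinj
    rw [hD, hψ]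
  have hder : ∀ a u v, D a (bracketF2 n u v) = bracketF2 n (D a u) v + bracketF2 n u (D a v) := by
    intro a u v
    apply hinj
    rw [map_add, hD, hψ, hψ, hψ, hD, hD, hL]
  have hT := fun a => tri_F2 hn (D a) (hder a)
  refine ⟨D, fun k a => (if k.val = 0 then 1 else if k.val = 1 then 0 else (k.val : ℂ)) *
      D a (Pi.single ⟨0, h00⟩ 1) ⟨0, h00⟩ + (if k.val = 1 then 1 else 0) *
      D a (Pi.single ⟨1, h11⟩ 1) ⟨1, h11⟩,
    LinearMap.proj ⟨0, h00⟩ ∘ₗ D.flip (Pi.single ⟨0, h00⟩ 1),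
    LinearMap.proj ⟨1, h11⟩ ∘ₗ D.flip (Pi.single ⟨1, h11⟩ 1),
    ⟨hL, hinj, hI, hD, ?_, ?_⟩, ?_⟩
  · intro a k u hu
    refine ⟨(hT a k u hu).1, ?_⟩
    rw [(hT a k u hu).2]
    split_ifs
    · omega
    all_goals ring
  · intro k u
    simp only [hDN, bracketF2]
    simp
  · intro k a
    simp

theorem exists_ab {n : ℕ} [FiniteDimensional ℂ L] {b : L →ₗ[ℂ] L →ₗ[ℂ] L}
    {ψ : (Fin n → ℂ) →ₗ[ℂ] L} (hinj : Function.Injective ψ)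
    (hdim : Module.finrank ℂ L = n + 2) (α β : L →ₗ[ℂ] ℂ)
    (hk : ∀ a, α a = 0 → β a = 0 → a ∈ LinearMap.range ψ) (s t : ℂ) :
    ∃ a, α a = s ∧ β a = t := by
  have h1 : LinearMap.ker (α.prod β) ≤ LinearMap.range ψ := by
    intro a ha
    rw [LinearMap.mem_ker, LinearMap.prod_apply] at ha
    exact hk a (congrArg Prod.fst ha) (congrArg Prod.snd ha)
  have h2 := Submodule.finrank_mono h1
  rw [LinearMap.finrank_range_of_inj hinj] at h2
  have h3 := LinearMap.finrank_range_add_finrank_ker (α.prod β)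
  have h4 : LinearMap.range (α.prod β) = ⊤ := by
    apply Submodule.eq_top_of_finrank_eq
    apply le_antisymm (Submodule.finrank_le _)
    simp at h2 ⊢
    omega
  obtain ⟨a, ha⟩ := LinearMap.range_eq_top.1 h4 (s, t)
  exact ⟨a, congrArg Prod.fst ha, congrArg Prod.snd ha⟩

theorem core {n : ℕ} [FiniteDimensional ℂ L] {b : L →ₗ[ℂ] L →ₗ[ℂ] L}
    {ψ : (Fin n → ℂ) →ₗ[ℂ] L} {D : L →ₗ[ℂ] (Fin n → ℂ) →ₗ[ℂ] (Fin n → ℂ)} {d : Fin n → L → ℂ}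
    (T : TriData n b ψ D d) (hN : IsNilradical b (LinearMap.range ψ)) (hs : IsSolvableBracket b)
    (hdim : Module.finrank ℂ L = n + 2) (α β : L →ₗ[ℂ] ℂ) (P Q : Fin n → ℂ)
    (hd : ∀ k a, d k a = P k * α a + Q k * β a)
    (s t : ℂ) (wt : Fin n → ℕ) (hwt : ∀ k, P k * s + Q k * t = (wt k : ℂ))
    (hwi : Function.Injective wt) (hw0 : ∀ k, wt k ≠ 0) (c : ℂ) :
    ∃ (h x y : L) (v : Fin n → Fin n → ℂ) (q r : Fin n → ℂ) (B : Module.Basis (Fin (n + 2)) ℂ L),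
      (∀ k, d k h = (wt k : ℂ)) ∧ (Function.Injective fun k => d k h) ∧
      (∀ k, v k ∈ flagV n k.val) ∧ (∀ k, v k k = 1) ∧ (∀ k, D h (v k) = d k h • v k) ∧
      (∀ i, B i = TriData.finalFam n x y (fun k => ψ (v k)) i) ∧
      b x x = 0 ∧ b x y = 0 ∧ b y x = 0 ∧ b y y = 0 ∧
      (∀ k, b (ψ (v k)) x = (P k + Q k * c) • ψ (v k)) ∧ (∀ k, b (ψ (v k)) y = Q k • ψ (v k)) ∧
      (∀ k, b x (ψ (v k)) = q k • ψ (v k)) ∧ (∀ k, b y (ψ (v k)) = r k • ψ (v k)) := by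
  have hsq : ∀ u v, b u v ∈ LinearMap.range ψ := T.sq_le hN rfl hs
  have hab := exists_ab (b := b) T.inj hdim α β (fun a h1 h2 => T.mem_of_d hN rfl hs
    (fun k => by rw [hd, h1, h2]; simp))
  obtain ⟨h, hh1, hh2⟩ := hab s t
  have hdh : ∀ k, d k h = (wt k : ℂ) := fun k => by rw [hd, hh1, hh2, hwt]
  have hdi : Function.Injective fun k => d k h := by
    intro i j hij
    simp only [hdh] at hij
    exact hwi (Nat.cast_injective hij)
  have hd0 : ∀ k, d k h ≠ 0 := fun k => by
    rw [hdh]; exact Nat.cast_ne_zero.2 (hw0 k)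
  choose v hvV hv1 hv using T.exists_eig hdi
  obtain ⟨x0, hx1, hx2⟩ := hab 1 c
  obtain ⟨y0, hy1, hy2⟩ := hab 0 1
  obtain ⟨x, hxh, hxd⟩ := T.exists_H hd0 hsq x0
  obtain ⟨y, hyh, hyd⟩ := T.exists_H hd0 hsq y0
  have hxd' : ∀ k, d k x = P k + Q k * c := fun k => by rw [hxd, hd, hx1, hx2]; ring
  have hyd' : ∀ k, d k y = Q k := fun k => by rw [hyd, hd, hy1, hy2]; ring
  choose q hq using fun k => T.left_H hdi hsq (hv1 k) (hv k) hxh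
  choose r hr using fun k => T.left_H hdi hsq (hv1 k) (hv k) hyh
  obtain ⟨B, hB⟩ := TriData.exists_basis (ψ := ψ) hdim (TriData.span_eig hdi hv1 hv) (x := x) (y := y) (by
    intro a
    have : a - (α a • x + (β a - α a * c) • y) ∈ LinearMap.range ψ := by
      refine T.mem_of_d hN rfl hs ?_
      intro k
      rw [T.d_sub, T.d_add, T.d_smul, T.d_smul, hxd', hyd', hd]
      ring
    obtain ⟨u, hu⟩ := this
    exact ⟨_, _, u, by rw [hu]; abel⟩)
  refine ⟨h, x, y, v, q, r, B, hdh, hdi, hvV, hv1, hv, hB, T.HH hd0 hsq hxh hxh,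
    T.HH hd0 hsq hxh hyh, T.HH hd0 hsq hyh hxh, T.HH hd0 hsq hyh hyh, ?_, ?_, hq, hr⟩
  · intro k
    rw [T.right_H hdi (hvV k) (hv1 k) (hv k) hxh, hxd']
  · intro k
    rw [T.right_H hdi (hvV k) (hv1 k) (hv k) hyh, hyd']

theorem prod_weight {n : ℕ} {b : L →ₗ[ℂ] L →ₗ[ℂ] L}
    {ψ : (Fin n → ℂ) →ₗ[ℂ] L} {D : L →ₗ[ℂ] (Fin n → ℂ) →ₗ[ℂ] (Fin n → ℂ)} {d : Fin n → L → ℂ}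
    (T : TriData n b ψ D d) {h : L} {u v w : Fin n → ℂ} {p q : ℂ} (hu : D h u = p • u)
    (hv : D h v = q • v) (hw : ψ w = b (ψ u) (ψ v)) : D h w = (p + q) • w := by
  apply T.inj
  rw [T.hD, hw, T.leib, ← T.hD h u, ← T.hD h v, hu, hv]
  simp only [map_smul, map_add, LinearMap.smul_apply, hw, add_smul]

theorem left_F1 {n : ℕ} (hn : 5 ≤ n) {b : L →ₗ[ℂ] L →ₗ[ℂ] L} (hL : IsLeibnizBracket b)
    {e : Fin n → L} (he : ∀ k, e k ≠ 0)
    (hee : ∀ i j, b (e i) (e j) = if h : j.val = 0 ∧ 1 ≤ i.val ∧ i.val + 1 < n then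
      e ⟨i.val + 1, h.2.2⟩ else 0) {a : L} {δ q : Fin n → ℂ}
    (hr : ∀ k, b (e k) a = δ k • e k) (hl : ∀ k, b a (e k) = q k • e k) (k : Fin n) :
    q k = if k.val = 0 then -δ k else 0 := by
  have h00 : 0 < n := by omega
  have h11 : 1 < n := by omega
  have h22 : 2 < n := by omega
  have hz : ∀ k : Fin n, 1 ≤ k.val → b (e ⟨0, h00⟩) (e k) = 0 := by
    intro k hk
    rw [hee, dif_neg (by simp)]
  have hs : ∀ k : Fin n, 1 ≤ k.val → ∀ h : k.val + 1 < n,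
      b (e k) (e ⟨0, h00⟩) = e ⟨k.val + 1, h⟩ := by
    intro k hk h
    rw [hee, dif_pos ⟨rfl, hk, h⟩]
  have h1 : ∀ k : Fin n, 1 ≤ k.val → k.val + 1 < n → q k = 0 := by
    intro k hk h
    have := hL a (e ⟨0, h00⟩) (e k)
    rw [hl, hl, hz k hk, map_smul, map_smul, LinearMap.smul_apply, LinearMap.smul_apply, hz k hk,
      hs k hk h, map_zero, smul_zero, add_zero] at this
    exact (smul_eq_zero.1 this.symm).resolve_right (he _)
  split_ifs with hk
  · have hk' : k = ⟨0, h00⟩ := Fin.ext hk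
    subst hk'
    have e1 := hL (e ⟨1, h11⟩) a (e ⟨0, h00⟩)
    have e2 := hL (e ⟨1, h11⟩) (e ⟨0, h00⟩) a
    have e3 := hs ⟨1, h11⟩ le_rfl h22
    simp only [hr, hl, map_smul, LinearMap.smul_apply, e3] at e1 e2
    rw [e2, add_assoc, ← add_smul] at e1
    have e4 := left_eq_add.1 e1
    have := (smul_eq_zero.1 e4).resolve_right (he _)
    linear_combination this
  · by_cases hk2 : k.val + 1 < n
    · exact h1 k (by omega) hk2
    · have hm : k.val - 1 < n := by omega
      have e0 := h1 ⟨k.val - 1, hm⟩ (by simp; omega) (by simp; omega)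
      have e3 := hs ⟨k.val - 1, hm⟩ (by simp; omega) (by simp; omega)
      have e4 : (⟨k.val - 1 + 1, by omega⟩ : Fin n) = k := Fin.ext (by simp; omega)
      simp only [e4] at e3
      have e5 := hL a (e ⟨k.val - 1, hm⟩) (e ⟨0, h00⟩)
      have e6 : b (e ⟨0, h00⟩) (e ⟨k.val - 1, hm⟩) = 0 := hz _ (by simp; omega)
      rw [hl, hl, e0, e3, hl, map_smul b (q ⟨0, h00⟩), LinearMap.smul_apply, e6] at e5
      simp only [zero_smul, map_zero, LinearMap.zero_apply, smul_zero, zero_add] at e5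
      exact (smul_eq_zero.1 e5.symm).resolve_right (he _)

theorem left_F2 {n : ℕ} (hn : 5 ≤ n) {b : L →ₗ[ℂ] L →ₗ[ℂ] L} (hL : IsLeibnizBracket b)
    {e : Fin n → L} (he : ∀ k, e k ≠ 0)
    (hee0 : ∀ i j, i.val = 0 → j.val = 0 → b (e i) (e j) = e ⟨2, by omega⟩)
    (hee1 : ∀ i j, j.val = 0 → 2 ≤ i.val → ∀ h : i.val + 1 < n, b (e i) (e j) = e ⟨i.val + 1, h⟩)
    (hee2 : ∀ i j, ¬ (j.val = 0 ∧ (i.val = 0 ∨ (2 ≤ i.val ∧ i.val + 1 < n))) → b (e i) (e j) = 0)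
    {a : L} {δ q : Fin n → ℂ}
    (hr : ∀ k, b (e k) a = δ k • e k) (hl : ∀ k, b a (e k) = q k • e k) (k : Fin n)
    (hk1 : k.val ≠ 1) :
    q k = if k.val = 0 then -δ k else 0 := by
  have h00 : 0 < n := by omega
  have hz : ∀ k : Fin n, 2 ≤ k.val → b (e ⟨0, h00⟩) (e k) = 0 := by
    intro k hk
    exact hee2 _ _ (by omega)
  have hs : ∀ k : Fin n, 2 ≤ k.val → ∀ h : k.val + 1 < n,
      b (e k) (e ⟨0, h00⟩) = e ⟨k.val + 1, h⟩ := by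
    intro k hk h
    exact hee1 _ _ rfl hk h
  have h1 : ∀ k : Fin n, 2 ≤ k.val → k.val + 1 < n → q k = 0 := by
    intro k hk h
    have := hL a (e ⟨0, h00⟩) (e k)
    rw [hl, hl, hz k hk, map_smul, map_smul, LinearMap.smul_apply, LinearMap.smul_apply, hz k hk,
      hs k hk h, map_zero, smul_zero, add_zero] at this
    exact (smul_eq_zero.1 this.symm).resolve_right (he _)
  split_ifs with hk
  · have hk' : k = ⟨0, h00⟩ := Fin.ext hk
    subst hk'
    have e1 := hL (e ⟨0, h00⟩) a (e ⟨0, h00⟩)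
    have e2 := hL (e ⟨0, h00⟩) (e ⟨0, h00⟩) a
    have e3 := hee0 ⟨0, h00⟩ ⟨0, h00⟩ rfl rfl
    simp only [hr, hl, map_smul, LinearMap.smul_apply, e3] at e1 e2
    rw [e2, add_assoc, ← add_smul] at e1
    have e4 := left_eq_add.1 e1
    have := (smul_eq_zero.1 e4).resolve_right (he _)
    linear_combination this
  · by_cases hk2 : k.val + 1 < n
    · exact h1 k (by omega) hk2
    · have hm : k.val - 1 < n := by omega
      have e0 := h1 ⟨k.val - 1, hm⟩ (by simp; omega) (by simp; omega)
      have e3 := hs ⟨k.val - 1, hm⟩ (by simp; omega) (by simp; omega)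
      have e4 : (⟨k.val - 1 + 1, by omega⟩ : Fin n) = k := Fin.ext (by simp; omega)
      simp only [e4] at e3
      have e5 := hL a (e ⟨k.val - 1, hm⟩) (e ⟨0, h00⟩)
      have e6 : b (e ⟨0, h00⟩) (e ⟨k.val - 1, hm⟩) = 0 := hz _ (by simp; omega)
      rw [hl, hl, e0, e3, hl, map_smul b (q ⟨0, h00⟩), LinearMap.smul_apply, e6] at e5
      simp only [zero_smul, map_zero, LinearMap.zero_apply, smul_zero, zero_add] at e5
      exact (smul_eq_zero.1 e5.symm).resolve_right (he _)

theorem e_ne {n : ℕ} {ψ : (Fin n → ℂ) →ₗ[ℂ] L} (hinj : Function.Injective ψ)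
    {v : Fin n → Fin n → ℂ} (hv1 : ∀ k, v k k = 1) (k : Fin n) : ψ (v k) ≠ 0 := by
  intro h0
  have h1 : v k = 0 := hinj (by rw [h0, map_zero])
  have h2 := hv1 k
  rw [h1] at h2
  simp at h2

theorem main_F1 {n : ℕ} (hn : 5 ≤ n) [FiniteDimensional ℂ L] {b : L →ₗ[ℂ] L →ₗ[ℂ] L}
    (hL : IsLeibnizBracket b) (hs : IsSolvableBracket b) (hdim : Module.finrank ℂ L = n + 2)
    {ψ : (Fin n → ℂ) →ₗ[ℂ] L} (hinj : Function.Injective ψ)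
    (hN : IsNilradical b (LinearMap.range ψ))
    (hψ : ∀ u v, ψ (bracketF1 n u v) = b (ψ u) (ψ v)) :
    ∃ φ : L ≃ₗ[ℂ] (Fin (n + 2) → ℂ), ∀ u v : L, φ (b u v) = bracketR1 n (φ u) (φ v) := by
  obtain ⟨D, d, α, β, T, hd⟩ := exists_tri_F1 hn hL hinj hN.1 hψ
  obtain ⟨h, x, y, v, q, r, B, hdh, hdi, hvV, hv1, hv, hB, hxx, hxy, hyx, hyy, hex, hey, hxe, hye⟩
    := core T hN hs hdim α β _ _ hd 1 2 (fun k => k.val + 1)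
      (by intro k; split_ifs with h0
          · simp [h0]
          · push_cast; ring)
      (by intro i j hij; exact Fin.ext (by simpa using hij)) (by intro k; simp) 1
  have h00 : 0 < n := by omega
  have hee : ∀ i j, b (ψ (v i)) (ψ (v j)) = if h : j.val = 0 ∧ 1 ≤ i.val ∧ i.val + 1 < n then
      ψ (v ⟨i.val + 1, h.2.2⟩) else 0 := by
    intro i j
    have hw := prod_weight T (hv i) (hv j) (hψ (v i) (v j))
    rw [hdh, hdh] at hw
    rw [← hψ]
    split_ifs with hij
    · obtain ⟨hj, hi, hin⟩ := hij
      have hj' : j = ⟨0, h00⟩ := Fin.ext hj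
      subst hj'
      have h1 := T.eig_eq hdi (hv1 ⟨i.val + 1, hin⟩) (hv _)
        (u := bracketF1 n (v i) (v ⟨0, h00⟩)) (by rw [hw, hdh]; push_cast; congr 1)
      have h2 : bracketF1 n (v i) (v ⟨0, h00⟩) ⟨i.val + 1, hin⟩ = 1 := by
        simp [bracketF1, hv1, hi]
      rw [h2, one_smul] at h1
      rw [h1]
    · have h0 : bracketF1 n (v i) (v j) = 0 := by
        by_cases hj : j.val = 0
        · refine T.eig_zero hw ?_
          intro k
          by_cases hk : k.val = i.val + 1
          · left
            have hk2 : ¬ 2 ≤ k.val := by have := k.isLt; omega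
            simp only [bracketF1, if_neg hk2]
          · right
            rw [hdh]
            intro h3
            have h4 : k.val + 1 = (i.val + 1) + (j.val + 1) := by exact_mod_cast h3
            omega
        · ext k
          have := hvV j ⟨0, h00⟩ (by simp; omega)
          simp [bracketF1, this]
      rw [h0, map_zero]
  have hne := e_ne hinj hv1
  refine table_R1 hn b x y (fun k => ψ (v k)) B hB hxx hxy hyx hyy ?_ ?_ ?_ ?_ hee
  · intro k
    rw [hex]
    split_ifs <;> congr 1 <;> ring
  · intro k
    exact hey k
  · intro k
    have := left_F1 hn hL hne hee hex hxe k
    rw [hxe, this]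
    split_ifs <;> congr 1
    ring
  · intro k
    have := left_F1 hn hL hne hee hey hye k
    rw [hye, this]
    split_ifs <;> simp

theorem main_F2 {n : ℕ} (hn : 5 ≤ n) [FiniteDimensional ℂ L] {b : L →ₗ[ℂ] L →ₗ[ℂ] L}
    (hL : IsLeibnizBracket b) (hs : IsSolvableBracket b) (hdim : Module.finrank ℂ L = n + 2)
    {ψ : (Fin n → ℂ) →ₗ[ℂ] L} (hinj : Function.Injective ψ)
    (hN : IsNilradical b (LinearMap.range ψ))
    (hψ : ∀ u v, ψ (bracketF2 n u v) = b (ψ u) (ψ v)) :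
    (∃ φ : L ≃ₗ[ℂ] (Fin (n + 2) → ℂ), ∀ u v : L, φ (b u v) = bracketR2 n (φ u) (φ v)) ∨
    ∃ φ : L ≃ₗ[ℂ] (Fin (n + 2) → ℂ), ∀ u v : L, φ (b u v) = bracketR3 n (φ u) (φ v) := by
  obtain ⟨D, d, α, β, T, hd⟩ := exists_tri_F2 hn hL hinj hN.1 hψ
  obtain ⟨h, x, y, v, q, r, B, hdh, hdi, hvV, hv1, hv, hB, hxx, hxy, hyx, hyy, hex, hey, hxe, hye⟩
    := core T hN hs hdim α β _ _ hd 1 (n + 5)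
      (fun k => if k.val = 0 then 1 else if k.val = 1 then n + 5 else k.val)
      (by intro k; split_ifs with h0 h1
          · omega
          all_goals (push_cast; ring))
      (by intro i j hij
          have := i.isLt
          have := j.isLt
          simp only [] at hij
          apply Fin.ext
          split_ifs at hij <;> omega) (by intro k; split_ifs <;> omega) 0
  have h00 : 0 < n := by omega
  have h11 : 1 < n := by omega
  have h22 : 2 < n := by omega
  have hw := fun i j => prod_weight T (hv i) (hv j) (hψ (v i) (v j))
  simp only [hdh] at hw
  have hee0 : ∀ i j, i.val = 0 → j.val = 0 → b (ψ (v i)) (ψ (v j)) = ψ (v ⟨2, by omega⟩) := by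
    intro i j hi hj
    have hi' : i = ⟨0, h00⟩ := Fin.ext hi
    have hj' : j = ⟨0, h00⟩ := Fin.ext hj
    subst hi' hj'
    have h1 := T.eig_eq hdi (hv1 ⟨2, h22⟩) (hv _)
      (u := bracketF2 n (v ⟨0, h00⟩) (v ⟨0, h00⟩)) (by rw [hw, hdh]; norm_num)
    have h2 : bracketF2 n (v ⟨0, h00⟩) (v ⟨0, h00⟩) ⟨2, h22⟩ = 1 := by
      simp [bracketF2, hv1]
    rw [h2, one_smul] at h1
    rw [← hψ, h1]
  have hee1 : ∀ i j, j.val = 0 → 2 ≤ i.val → ∀ h : i.val + 1 < n,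
      b (ψ (v i)) (ψ (v j)) = ψ (v ⟨i.val + 1, h⟩) := by
    intro i j hj hi hin
    have hj' : j = ⟨0, h00⟩ := Fin.ext hj
    subst hj'
    have h1 := T.eig_eq hdi (hv1 ⟨i.val + 1, hin⟩) (hv _)
      (u := bracketF2 n (v i) (v ⟨0, h00⟩)) (by
        rw [hw, hdh]
        rw [if_neg (by omega), if_neg (by omega), if_pos rfl, if_neg (by simp),
          if_neg (by simp; omega)]
        push_cast; rfl)
    have h2 : bracketF2 n (v i) (v ⟨0, h00⟩) ⟨i.val + 1, hin⟩ = 1 := by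
      have a1 : ¬ i.val + 1 = 2 := by omega
      have a2 : 3 ≤ i.val + 1 := by omega
      simp only [bracketF2, if_neg a1, if_pos a2]
      simp [hv1]
    rw [h2, one_smul] at h1
    rw [← hψ, h1]
  have hee2 : ∀ i j, ¬ (j.val = 0 ∧ (i.val = 0 ∨ (2 ≤ i.val ∧ i.val + 1 < n))) →
      b (ψ (v i)) (ψ (v j)) = 0 := by
    intro i j hij
    have h0 : bracketF2 n (v i) (v j) = 0 := by
      by_cases hj : j.val = 0
      · refine T.eig_zero (hw i j) ?_
        intro k
        right
        rw [hdh]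
        intro h3
        have h4 := (Nat.cast_injective (R := ℂ)) ((h3.trans (Nat.cast_add _ _).symm))
        have := i.isLt
        have := k.isLt
        clear * - h4 hj hij hn this
        grind
      · ext k
        have := hvV j ⟨0, h00⟩ (by simp; omega)
        simp [bracketF2, this]
    rw [← hψ, h0, map_zero]
  have hne := e_ne hinj hv1
  have hqx := left_F2 hn hL hne hee0 hee1 hee2 hex hxe
  have hqy := left_F2 hn hL hne hee0 hee1 hee2 hey hye
  have hx1 : q ⟨1, h11⟩ = 0 := by
    have e1 := hL x x (ψ (v ⟨1, h11⟩))
    simp only [hxx, hxe, hex, map_smul, LinearMap.smul_apply, map_zero, LinearMap.zero_apply] at e1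
    rw [smul_smul, smul_smul, ← add_smul] at e1
    have e2 := (smul_eq_zero.1 e1.symm).resolve_right (hne _)
    simp at e2
    exact e2
  have hy1 : r ⟨1, h11⟩ = 0 ∨ r ⟨1, h11⟩ = -1 := by
    have e1 := hL y y (ψ (v ⟨1, h11⟩))
    simp only [hyy, hye, hey, map_smul, LinearMap.smul_apply, map_zero, LinearMap.zero_apply] at e1
    rw [smul_smul, smul_smul, ← add_smul] at e1
    have e2 := (smul_eq_zero.1 e1.symm).resolve_right (hne _)
    simp at e2
    have e3 : r ⟨1, h11⟩ * (r ⟨1, h11⟩ + 1) = 0 := by linear_combination e2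
    rcases mul_eq_zero.1 e3 with h | h
    · exact Or.inl h
    · exact Or.inr (eq_neg_of_add_eq_zero_left h)
  have fin : ∀ c₀ : ℂ, r ⟨1, h11⟩ = -c₀ → ∃ φ : L ≃ₗ[ℂ] (Fin (n + 2) → ℂ),
      ∀ u v : L, φ (b u v) = bracketR23 n c₀ (φ u) (φ v) := by
    intro c₀ hc
    refine table_R23 c₀ hn b x y (fun k => ψ (v k)) B hB hxx hxy hyx hyy ?_ hey ?_ ?_
      hee0 hee1 hee2
    · intro k
      rw [hex, mul_zero, add_zero]
    · intro k
      rw [hxe]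
      by_cases hk : k.val = 1
      · have hk' : k = ⟨1, h11⟩ := Fin.ext hk
        subst hk'
        rw [hx1]; simp
      · rw [hqx k hk]
        split_ifs <;> simp
    · intro k
      rw [hye]
      by_cases hk : k.val = 1
      · have hk' : k = ⟨1, h11⟩ := Fin.ext hk
        subst hk'
        rw [hc]; simp
      · rw [hqy k hk]
        split_ifs <;> simp
  rcases hy1 with h | h
  · right
    obtain ⟨φ, hφ⟩ := fin 0 (by rw [h, neg_zero])
    exact ⟨φ, fun u v => by rw [hφ, bracketR23_zero]⟩
  · left
    obtain ⟨φ, hφ⟩ := fin 1 h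
    exact ⟨φ, fun u v => by rw [hφ, bracketR23_one]⟩

end Helpers
/-- Any `(n+2)`-dimensional complex solvable Leibniz algebra (`n ≥ 5`) whose nilradical is
isomorphic to the naturally graded non-Lie filiform Leibniz algebra `F_n^1` or `F_n^2`
is isomorphic to one of `R₁`, `R₂`, `R₃`. -/
theorem solvable_leibniz_with_filiform_nilradical
    (n : ℕ) (hn : 5 ≤ n)
    (L : Type) [AddCommGroup L] [Module ℂ L] [FiniteDimensional ℂ L]
    (b : L →ₗ[ℂ] L →ₗ[ℂ] L) (hLeib : IsLeibnizBracket b)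
    (hsolv : IsSolvableBracket b)
    (hdim : Module.finrank ℂ L = n + 2)
    (N : Submodule ℂ L) (hNrad : IsNilradical b N)
    (hNiso :
      (∃ ψ : (Fin n → ℂ) →ₗ[ℂ] L, Function.Injective ψ ∧ LinearMap.range ψ = N ∧
        ∀ u v, ψ (bracketF1 n u v) = b (ψ u) (ψ v)) ∨
      (∃ ψ : (Fin n → ℂ) →ₗ[ℂ] L, Function.Injective ψ ∧ LinearMap.range ψ = N ∧
        ∀ u v, ψ (bracketF2 n u v) = b (ψ u) (ψ v))) :
    (∃ φ : L ≃ₗ[ℂ] (Fin (n + 2) → ℂ),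
        ∀ u v : L, φ (b u v) = bracketR1 n (φ u) (φ v)) ∨
    (∃ φ : L ≃ₗ[ℂ] (Fin (n + 2) → ℂ),
        ∀ u v : L, φ (b u v) = bracketR2 n (φ u) (φ v)) ∨
    (∃ φ : L ≃ₗ[ℂ] (Fin (n + 2) → ℂ),
        ∀ u v : L, φ (b u v) = bracketR3 n (φ u) (φ v)) := by
  rcases hNiso with ⟨ψ, hinj, rfl, hψ⟩ | ⟨ψ, hinj, rfl, hψ⟩
  · exact Or.inl (main_F1 hn hLeib hsolv hdim hinj hNrad hψ)
  · exact Or.inr (main_F2 hn hLeib hsolv hdim hinj hNrad hψ)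
end

section
/- Let n ≥ 5. The (n+2)-dimensional complex solvable Leibniz algebras R_1, R_2 and R_3 are pairwise non-isomorphic. -/
/-- Two brackets on `Fin (n+2) → ℂ` give isomorphic Leibniz algebras:
there is a bijective `ℂ`-linear map carrying one bracket to the other. -/
def LeibnizIso (n : ℕ)
    (b b' : (Fin (n + 2) → ℂ) → (Fin (n + 2) → ℂ) → (Fin (n + 2) → ℂ)) : Prop :=
  ∃ φ : (Fin (n + 2) → ℂ) ≃ₗ[ℂ] (Fin (n + 2) → ℂ), ∀ u v, φ (b u v) = b' (φ u) (φ v)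

theorem LeibnizIso.symm' {n : ℕ}
    {b b' : (Fin (n + 2) → ℂ) → (Fin (n + 2) → ℂ) → (Fin (n + 2) → ℂ)}
    (h : LeibnizIso n b b') : LeibnizIso n b' b := by
  obtain ⟨φ, h⟩ := h
  refine ⟨φ.symm, fun u v => ?_⟩
  apply φ.injective
  rw [h]
  simp

/-- Invariant separating `R₂` from the other two. -/
def PropP (n : ℕ) (b : (Fin (n + 2) → ℂ) → (Fin (n + 2) → ℂ) → (Fin (n + 2) → ℂ)) : Prop :=
  ∃ a c x y, a ≠ 0 ∧ c ≠ 0 ∧ b x a = -a ∧ b c y = c ∧ b y c = -c ∧ b a y = 0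

/-- Invariant separating `R₃` from `R₁`. -/
def PropQ (n : ℕ) (b : (Fin (n + 2) → ℂ) → (Fin (n + 2) → ℂ) → (Fin (n + 2) → ℂ)) : Prop :=
  ∃ y e a, b e y ≠ 0 ∧ (∀ u, b (b u y) y = b u y) ∧ b a y = 0 ∧ b a a ≠ 0

theorem PropP.iso {n : ℕ}
    {b b' : (Fin (n + 2) → ℂ) → (Fin (n + 2) → ℂ) → (Fin (n + 2) → ℂ)}
    (h : LeibnizIso n b b') (hp : PropP n b) : PropP n b' := by
  obtain ⟨φ, h⟩ := h
  obtain ⟨a, c, x, y, h1, h2, h3, h4, h5, h6⟩ := hp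
  refine ⟨φ a, φ c, φ x, φ y, ?_, ?_, ?_, ?_, ?_, ?_⟩
  · simpa using h1
  · simpa using h2
  · rw [← h, h3, map_neg]
  · rw [← h, h4]
  · rw [← h, h5, map_neg]
  · rw [← h, h6, map_zero]

theorem PropQ.iso {n : ℕ}
    {b b' : (Fin (n + 2) → ℂ) → (Fin (n + 2) → ℂ) → (Fin (n + 2) → ℂ)}
    (h : LeibnizIso n b b') (hp : PropQ n b) : PropQ n b' := by
  obtain ⟨φ, h⟩ := h
  obtain ⟨y, e, a, h1, h2, h3, h4⟩ := hp
  refine ⟨φ y, φ e, φ a, ?_, ?_, ?_, ?_⟩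
  · rw [← h]; simpa using h1
  · intro u
    obtain ⟨w, rfl⟩ := φ.surjective u
    rw [← h, ← h, h2]
  · rw [← h, h3, map_zero]
  · rw [← h]; simpa using h4

/-- Common shape: brackets whose right annihilator contains all vectors with vanishing
coordinates `0, 1, n+1`, and with the standard first coordinates, cannot satisfy `PropP`. -/
theorem not_PropP {n : ℕ} (b : (Fin (n + 2) → ℂ) → (Fin (n + 2) → ℂ) → (Fin (n + 2) → ℂ))
    (h0 : ∀ u v, b u v 0 = 0) (hl : ∀ u v, b u v (Fin.last (n + 1)) = 0)
    (h1 : ∀ u v, b u v 1 = u 1 * v 0 - u 0 * v 1)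
    (hz : ∀ u v, v 0 = 0 → v 1 = 0 → v (Fin.last (n + 1)) = 0 → b u v = 0) :
    ¬ PropP n b := by
  rintro ⟨a, c, x, y, ha, hc, e1, e2, e3, e4⟩
  have key : ∀ w z, w ≠ 0 → b z w = -w → w 0 = 0 ∧ w 1 ≠ 0 := by
    intro w z hw h
    have w0 : w 0 = 0 := by
      have := congrFun h 0
      rw [h0] at this
      simpa using this.symm
    have wl : w (Fin.last (n + 1)) = 0 := by
      have := congrFun h (Fin.last (n + 1))
      rw [hl] at this
      simpa using this.symm
    refine ⟨w0, fun w1 => hw ?_⟩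
    have := hz z w w0 w1 wl
    rw [h] at this
    simpa using this
  obtain ⟨a0, a1⟩ := key a x ha e1
  obtain ⟨c0, c1⟩ := key c y hc e3
  have q1 := congrFun e2 1
  have q2 := congrFun e4 1
  rw [h1] at q1 q2
  simp only [a0, c0, zero_mul, sub_zero, Pi.zero_apply] at q1 q2
  have : y 0 = 0 := by
    rcases mul_eq_zero.1 q2 with h | h
    · exact absurd h a1
    · exact h
  rw [this, mul_zero] at q1
  exact c1 q1.symm

theorem fin_val_two {n : ℕ} (hn : 5 ≤ n) : (2 : Fin (n + 2)).val = 2 :=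
  Nat.mod_eq_of_lt (show 2 < n + 2 by omega)

theorem not_PropP_R1 (n : ℕ) (hn : 5 ≤ n) : ¬ PropP n (bracketR1 n) := by
  apply not_PropP
  · intro u v; simp [bracketR1]
  · intro u v
    have : n ≠ 0 := by omega
    simp [bracketR1, this]
  · intro u v; simp [bracketR1]
  · intro u v h0 h1 hl
    funext k
    simp [bracketR1, h0, h1, hl]

theorem not_PropP_R3 (n : ℕ) (hn : 5 ≤ n) : ¬ PropP n (bracketR3 n) := by
  apply not_PropP
  · intro u v; simp [bracketR3]
  · intro u v
    have : n ≠ 0 := by omega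
    have : n ≠ 1 := by omega
    simp [bracketR3, *]
  · intro u v; simp [bracketR3]
  · intro u v h0 h1 hl
    funext k
    simp [bracketR3, h0, h1, hl]

theorem PropP_R2 (n : ℕ) (hn : 5 ≤ n) : PropP n (bracketR2 n) := by
  have v2 := fin_val_two hn
  have hne : (1 : Fin (n + 2)) ≠ 2 := by rw [Ne, Fin.ext_iff, v2]; simp
  have hne0 : (0 : Fin (n + 2)) ≠ 2 := by rw [Ne, Fin.ext_iff, v2]; simp
  have hl0 : Fin.last (n + 1) ≠ 0 := by simp [Fin.ext_iff]
  have hl1 : Fin.last (n + 1) ≠ 1 := by rw [Ne, Fin.ext_iff]; simp; omega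
  have hl2 : Fin.last (n + 1) ≠ 2 := by rw [Ne, Fin.ext_iff, v2]; simp; omega
  refine ⟨Pi.single 1 1, Pi.single 2 1, Pi.single 0 1, Pi.single (Fin.last (n + 1)) 1,
    by simp, by simp, ?_, ?_, ?_, ?_⟩ <;> funext k <;>
    simp only [bracketR2, Pi.single_apply, Pi.neg_apply, Pi.zero_apply, Fin.ext_iff, v2,
      Fin.val_zero, Fin.val_one, Fin.val_last] <;>
    split_ifs <;> first | omega | simp_all

theorem PropQ_R3 (n : ℕ) (hn : 5 ≤ n) : PropQ n (bracketR3 n) := by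
  have v2 := fin_val_two hn
  refine ⟨Pi.single (Fin.last (n + 1)) 1, Pi.single 2 1, Pi.single 1 1, ?_, ?_, ?_, ?_⟩
  · intro h
    have := congrFun h 2
    simp only [bracketR3, v2] at this
    simp at this
  · intro u
    funext k
    simp only [bracketR3, Pi.single_apply, Fin.ext_iff, v2,
      Fin.val_zero, Fin.val_one, Fin.val_last]
    split_ifs <;> first | omega | simp_all
  · funext k
    simp only [bracketR3, Pi.single_apply, Pi.zero_apply, Fin.ext_iff, v2,
      Fin.val_zero, Fin.val_one, Fin.val_last]
    split_ifs <;> first | omega | simp_all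
  · intro h
    have := congrFun h ⟨3, by omega⟩
    have h3 : 3 ≤ n := by omega
    simp [bracketR3, h3] at this

theorem not_PropQ_R1 (n : ℕ) (hn : 5 ≤ n) : ¬ PropQ n (bracketR1 n) := by
  rintro ⟨y, e, a, h1, h2, h3, h4⟩
  have hh2 : 2 ≤ n := by omega
  have hh3 : 3 ≤ n := by omega
  have hh4 : 4 ≤ n := by omega
  have q2 := congrFun (h2 (Pi.single ⟨2, by omega⟩ 1)) ⟨2, by omega⟩
  have q23 := congrFun (h2 (Pi.single ⟨2, by omega⟩ 1)) ⟨3, by omega⟩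
  have q3 := congrFun (h2 (Pi.single ⟨3, by omega⟩ 1)) ⟨3, by omega⟩
  have q4 := congrFun (h2 (Pi.single ⟨4, by omega⟩ 1)) ⟨4, by omega⟩
  simp [bracketR1, hh2, hh3, hh4] at q2 q23 q3 q4
  generalize hyl : y (Fin.last (n + 1)) = l at *
  generalize hy0 : y 0 = p at *
  generalize hy1 : y 1 = q at *
  have p0 : p = 0 := by
    have : p ^ 2 = 0 := by linear_combination (1 / 2 : ℂ) * q2 - q3 + (1 / 2 : ℂ) * q4
    exact pow_eq_zero_iff (two_ne_zero) |>.1 this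
  subst p0
  have l01 : l = 0 ∨ l = 1 := by
    have : l * (l - 1) = 0 := by linear_combination q2
    rcases mul_eq_zero.1 this with h | h
    · exact Or.inl h
    · exact Or.inr (sub_eq_zero.1 h)
  have q0 : q = 0 := by
    rcases l01 with rfl | rfl <;> [linear_combination -q23; linear_combination q23]
  subst q0
  rcases l01 with rfl | rfl
  · apply h1
    funext k
    simp [bracketR1, hyl, hy0, hy1]
  · apply h4
    have ha : ∀ k : Fin (n + 2), 2 ≤ k.val → k.val ≤ n → a k = 0 := by
      intro k hk hk'
      have hk1 : k.val ≠ 1 := by omega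
      have := congrFun h3 k
      simpa [bracketR1, hyl, hy0, hy1, hk, hk', hk1] using this
    funext k
    simp only [bracketR1, Pi.zero_apply]
    split_ifs with c1 c2 c3
    · ring
    · rw [ha k c2.1 c2.2, ha ⟨k.val - 1, _⟩ (by simp; omega) (by simp; omega)]; ring
    · rw [ha k c2.1 c2.2]; ring
    · rfl

/-- The `(n+2)`-dimensional solvable Leibniz algebras `R₁`, `R₂`, `R₃` (`n ≥ 5`) are
pairwise non-isomorphic. -/
theorem R1_R2_R3_pairwise_nonisomorphic (n : ℕ) (hn : 5 ≤ n) :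
    ∀ i j : Fin 3, i ≠ j →
      ¬ LeibnizIso n (![bracketR1 n, bracketR2 n, bracketR3 n] i)
        (![bracketR1 n, bracketR2 n, bracketR3 n] j) := by
  have n12 : ¬ LeibnizIso n (bracketR2 n) (bracketR1 n) := fun h =>
    not_PropP_R1 n hn (PropP.iso h (PropP_R2 n hn))
  have n32 : ¬ LeibnizIso n (bracketR2 n) (bracketR3 n) := fun h =>
    not_PropP_R3 n hn (PropP.iso h (PropP_R2 n hn))
  have n31 : ¬ LeibnizIso n (bracketR3 n) (bracketR1 n) := fun h =>
    not_PropQ_R1 n hn (PropQ.iso h (PropQ_R3 n hn))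
  intro i j hij
  fin_cases i <;> fin_cases j
  · exact absurd rfl hij
  · exact fun h => n12 h.symm'
  · exact fun h => n31 h.symm'
  · exact n12
  · exact absurd rfl hij
  · exact n32
  · exact n31
  · exact fun h => n32 h.symm'
  · exact absurd rfl hij
end
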